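/- arXiv:2508.15538 — 2 statements merged into one kernel-verified Lean document; each statement's English description precedes it below -/
import Mathlib

section
/- Let P be a finite graded simplicial poset of rank n with positive h-vector, let P̂ be P with a top element adjoined, and let P̂* be its dual poset. Then the roots of the Chow polynomial H_{P̂*}(x) interlace the roots of the augmented Chow polynomial H^aug_{P̂}(x), i.e. H_{P̂*} ⪯ H^aug_{P̂}. -/
open Polynomial

noncomputable section

/-- A real polynomial is *real-rooted* if all of its complex roots are real.
(The zero polynomial is real-rooted by convention.) -/
def RealRooted (f : Polynomial ℝ) : Prop :=
  ∀ z ∈ (f.map (algebraMap ℝ ℂ)).roots, z.im = 0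

/-- All coefficients of the polynomial are nonnegative. -/
def NonnegCoeffs (f : Polynomial ℝ) : Prop := ∀ i, 0 ≤ f.coeff i

/-- The list of real roots of `f`, with multiplicity, in weakly decreasing order. -/
def descRoots (f : Polynomial ℝ) : List ℝ := (f.roots.sort (· ≤ ·)).reverse

/-- The interlacing condition on the weakly decreasing root sequences
`α` of `f` and `β` of `g` : `β₁ ≥ α₁ ≥ β₂ ≥ α₂ ≥ …`, together with the
degree condition `deg g ∈ {deg f, deg f + 1}`. -/
def InterlacesAux (f g : Polynomial ℝ) : Prop :=
  (g.natDegree = f.natDegree ∨ g.natDegree = f.natDegree + 1) ∧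
  (∀ (i : ℕ) (hf : i < (descRoots f).length) (hg : i < (descRoots g).length),
      (descRoots f).get ⟨i, hf⟩ ≤ (descRoots g).get ⟨i, hg⟩) ∧
  (∀ (i : ℕ) (hf : i < (descRoots f).length) (hg : i + 1 < (descRoots g).length),
      (descRoots g).get ⟨i + 1, hg⟩ ≤ (descRoots f).get ⟨i, hf⟩)

/-- `f ⪯ g` : `f` interlaces `g`.  Both polynomials are required to be real-rooted;
by convention `0 ⪯ 0`, `0 ⪯ f`, `f ⪯ 0`, and any two polynomials of degree at most 1
interlace. -/
def Interlaces (f g : Polynomial ℝ) : Prop :=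
  RealRooted f ∧ RealRooted g ∧
  (f = 0 ∨ g = 0 ∨ (f.natDegree ≤ 1 ∧ g.natDegree ≤ 1) ∨ InterlacesAux f g)

/-- A finite family of real-rooted polynomials is an interlacing sequence if
`F i ⪯ F j` for all `i < j`. -/
def InterlacingSeq {n : ℕ} (F : Fin n → Polynomial ℝ) : Prop :=
  ∀ i j : Fin n, i < j → Interlaces (F i) (F j)

/-- A polynomial of degree `d` is palindromic if `coeff i = coeff (d - i)` for all `i ≤ d`. -/
def Palindromic (f : Polynomial ℝ) : Prop :=
  ∀ i ≤ f.natDegree, f.coeff i = f.coeff (f.natDegree - i)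

/-- A set `S ⊆ ℕ` is isolated if `i ∈ S` implies `i + 1 ∉ S`. -/
def IsolatedSet (S : Finset ℕ) : Prop := ∀ i ∈ S, i + 1 ∉ S

instance : DecidablePred IsolatedSet := fun S =>
  decidable_of_iff (∀ i ∈ S, i + 1 ∉ S) Iff.rfl

/-- The descent set of a permutation `w` of `{1, …, n+1}` (encoded as a permutation of
`Fin (n+1)`), as a subset of `{1, …, n}` : `Des(w) = {i ∈ {1,…,n} : w(i) > w(i+1)}`. -/
def desSet {n : ℕ} (w : Equiv.Perm (Fin (n + 1))) : Finset ℕ :=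
  (Finset.univ.filter (fun i : Fin n => w i.succ < w i.castSucc)).image
    (fun i => i.val + 1)

/-- The polynomial `p_{n,k}^{S ⊆ T}(x) = Σ x^{des(w)}`, the sum over all permutations `w`
of `{1, …, n+1}` with `w(1) = k + 1`, `Des(w)` isolated and `S ⊆ Des(w) ⊆ T`. -/
def pPoly (n k : ℕ) (S T : Finset ℕ) : Polynomial ℝ :=
  ∑ w ∈ Finset.univ.filter (fun w : Equiv.Perm (Fin (n + 1)) =>
      (w 0 : ℕ) = k ∧ IsolatedSet (desSet w) ∧ S ⊆ desSet w ∧ desSet w ⊆ T),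
    Polynomial.X ^ (desSet w).card

/-- The shifted set `S - 1 = {i - 1 : i ∈ S} ∩ {1, …, n-1}`. -/
def shiftDown (n : ℕ) (S : Finset ℕ) : Finset ℕ :=
  (S.image (fun i => i - 1)) ∩ Finset.Icc 1 (n - 1)

section Poset

variable (P : Type*) [Fintype P] [PartialOrder P] [OrderBot P]

/-- A finite poset `P` with a minimum is simplicial of rank `n` if for every maximal
element `m` the interval `[⊥, m]` is order-isomorphic to the boolean lattice of
subsets of an `n`-element set. -/
def SimplicialOfRank (n : ℕ) : Prop :=
  ∀ m : P, IsMax m → Nonempty ((Set.Icc (⊥ : P) m) ≃o Finset (Fin n))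

variable {P}

/-- `rk` is a rank function: `rk ⊥ = 0` and ranks increase by one along covers. -/
def IsRankFunction (rk : P → ℕ) : Prop :=
  rk ⊥ = 0 ∧ ∀ a b : P, a ⋖ b → rk b = rk a + 1

/-- `f_{i-1}` : the number of elements of `P` of rank `i`. -/
def fvec (rk : P → ℕ) (i : ℕ) : ℕ := (Finset.univ.filter (fun x => rk x = i)).card

/-- The generating polynomial `Σ_{i=0}^n h_i x^i = Σ_{i=0}^n f_{i-1} x^i (1-x)^{n-i}`
of the h-vector of `P`. -/
def hPoly (rk : P → ℕ) (n : ℕ) : Polynomial ℤ :=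
  ∑ i ∈ Finset.range (n + 1),
    Polynomial.C (fvec rk i : ℤ) * Polynomial.X ^ i * (1 - Polynomial.X) ^ (n - i)

/-- The h-vector entry `h_k` of `P`. -/
def hvec (rk : P → ℕ) (n k : ℕ) : ℤ := (hPoly rk n).coeff k

/-- The flag f-vector `α_{P̂}(T)` : the number of chains in `P̂ ∖ {0̂, 1̂} = P ∖ {⊥}`
whose set of ranks is exactly `T`. -/
def flagF (rk : P → ℕ) (T : Finset ℕ) : ℕ :=
  Nat.card {c : Finset P // IsChain (· ≤ ·) (c : Set P) ∧ (⊥ : P) ∉ c ∧ c.image rk = T}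

/-- The flag h-vector `β_{P̂}(S) = Σ_{T ⊆ S} (-1)^{|S ∖ T|} α_{P̂}(T)`. -/
def flagH (rk : P → ℕ) (S : Finset ℕ) : ℤ :=
  ∑ T ∈ S.powerset, (-1) ^ ((S \ T).card) * (flagF rk T : ℤ)

/-- The flag h-vector of the dual poset `P̂*` : `β_{P̂*}(S) = β_{P̂}({n+1-s : s ∈ S})`. -/
def flagHDual (rk : P → ℕ) (n : ℕ) (S : Finset ℕ) : ℤ :=
  flagH rk (S.image (fun s => n + 1 - s))

/-- The Chow polynomial
`H_{P̂}(x) = Σ_{S ⊆ {2,…,n} isolated} β_{P̂}(S) x^{|S|} (1+x)^{n-2|S|}`. -/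
def chowPoly (rk : P → ℕ) (n : ℕ) : Polynomial ℝ :=
  ∑ S ∈ (Finset.Icc 2 n).powerset.filter IsolatedSet,
    (flagH rk S : ℝ) • (Polynomial.X ^ S.card * (1 + Polynomial.X) ^ (n - 2 * S.card))

/-- The augmented Chow polynomial
`H^aug_{P̂}(x) = Σ_{S ⊆ {1,…,n} isolated} β_{P̂}(S) x^{|S|} (1+x)^{n+1-2|S|}`. -/
def chowAugPoly (rk : P → ℕ) (n : ℕ) : Polynomial ℝ :=
  ∑ S ∈ (Finset.Icc 1 n).powerset.filter IsolatedSet,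
    (flagH rk S : ℝ) • (Polynomial.X ^ S.card * (1 + Polynomial.X) ^ (n + 1 - 2 * S.card))

/-- The Chow polynomial of the dual poset `P̂*`. -/
def chowDualPoly (rk : P → ℕ) (n : ℕ) : Polynomial ℝ :=
  ∑ S ∈ (Finset.Icc 2 n).powerset.filter IsolatedSet,
    (flagHDual rk n S : ℝ) • (Polynomial.X ^ S.card * (1 + Polynomial.X) ^ (n - 2 * S.card))

/-- The augmented Chow polynomial of the dual poset `P̂*`. -/
def chowAugDualPoly (rk : P → ℕ) (n : ℕ) : Polynomial ℝ :=
  ∑ S ∈ (Finset.Icc 1 n).powerset.filter IsolatedSet,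
    (flagHDual rk n S : ℝ) • (Polynomial.X ^ S.card * (1 + Polynomial.X) ^ (n + 1 - 2 * S.card))

end Poset

end

/-- `RR t u v`: `v * conj u` lies in the convex cone generated by `1` and `t`. -/
def RR (t u v : ℂ) : Prop :=
  ∃ α β : ℝ, 0 ≤ α ∧ 0 ≤ β ∧ v * (starRingEnd ℂ) u = α + β * t

namespace RR

variable {t u v u' v' : ℂ}

lemma refl (t u : ℂ) : RR t u u :=
  ⟨Complex.normSq u, 0, Complex.normSq_nonneg u, le_rfl, by rw [Complex.mul_conj]; simp⟩

lemma zero_left (t v : ℂ) : RR t 0 v := ⟨0, 0, le_rfl, le_rfl, by simp⟩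

lemma zero_right (t u : ℂ) : RR t u 0 := ⟨0, 0, le_rfl, le_rfl, by simp⟩

lemma add_left (h : RR t u v) (h' : RR t u' v) : RR t (u + u') v := by
  obtain ⟨α, β, hα, hβ, h⟩ := h
  obtain ⟨α', β', hα', hβ', h'⟩ := h'
  refine ⟨α + α', β + β', by positivity, by positivity, ?_⟩
  rw [map_add, mul_add, h, h']; push_cast; ring

lemma add_right (h : RR t u v) (h' : RR t u v') : RR t u (v + v') := by
  obtain ⟨α, β, hα, hβ, h⟩ := h
  obtain ⟨α', β', hα', hβ', h'⟩ := h'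
  refine ⟨α + α', β + β', by positivity, by positivity, ?_⟩
  rw [add_mul, h, h']; push_cast; ring

lemma smul_left (r : ℝ) (hr : 0 ≤ r) (h : RR t u v) : RR t (r * u) v := by
  obtain ⟨α, β, hα, hβ, h⟩ := h
  refine ⟨r * α, r * β, by positivity, by positivity, ?_⟩
  rw [map_mul, Complex.conj_ofReal, mul_left_comm, h]; push_cast; ring

lemma smul_right (r : ℝ) (hr : 0 ≤ r) (h : RR t u v) : RR t u (r * v) := by
  obtain ⟨α, β, hα, hβ, h⟩ := h
  refine ⟨r * α, r * β, by positivity, by positivity, ?_⟩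
  rw [mul_assoc, h]; push_cast; ring

/-- The key twist: `u ⪯ v` implies `v ⪯ t u`. -/
lemma twist (h : RR t u v) : RR t v (t * u) := by
  obtain ⟨α, β, hα, hβ, h⟩ := h
  refine ⟨β * Complex.normSq t, α, mul_nonneg hβ (Complex.normSq_nonneg t), hα, ?_⟩
  have h2 : u * (starRingEnd ℂ) v = α + β * (starRingEnd ℂ) t := by
    have := congrArg (starRingEnd ℂ) h
    simp only [map_mul, map_add, Complex.conj_conj, Complex.conj_ofReal] at this
    rw [mul_comm, this]
  rw [mul_assoc, h2]
  push_cast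
  rw [← Complex.mul_conj]; ring

lemma mul_both (h : RR t u v) : RR t (t * u) (t * v) := h.twist.twist

lemma sum_left {ι : Type*} {s : Finset ι} {f : ι → ℂ} (h : ∀ i ∈ s, RR t (f i) v) :
    RR t (∑ i ∈ s, f i) v := by
  classical
  induction s using Finset.induction_on with
  | empty => simpa using zero_left t v
  | insert a s ha ih =>
    rw [Finset.sum_insert ha]
    exact (h a (by simp)).add_left (ih fun i hi => h i (by simp [hi]))

lemma sum_right {ι : Type*} {s : Finset ι} {f : ι → ℂ} (h : ∀ i ∈ s, RR t u (f i)) :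
    RR t u (∑ i ∈ s, f i) := by
  classical
  induction s using Finset.induction_on with
  | empty => simpa using zero_right t u
  | insert a s ha ih =>
    rw [Finset.sum_insert ha]
    exact (h a (by simp)).add_right (ih fun i hi => h i (by simp [hi]))

lemma sum_sum {ι κ : Type*} {s : Finset ι} {s' : Finset κ} {f : ι → ℂ} {g : κ → ℂ}
    (h : ∀ i ∈ s, ∀ j ∈ s', RR t (f i) (g j)) :
    RR t (∑ i ∈ s, f i) (∑ j ∈ s', g j) :=
  sum_left fun i hi => sum_right fun j hj => h i hi j hj

lemma add_ne_zero (ht : t ∈ Complex.slitPlane) (hu : u ≠ 0) (h : RR t u v) : u + v ≠ 0 := by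
  intro h0
  obtain ⟨α, β, hα, hβ, h⟩ := h
  have hv : v = -u := by linear_combination h0
  rw [hv, neg_mul, Complex.mul_conj] at h
  have hn : 0 < Complex.normSq u := Complex.normSq_pos.mpr hu
  have hre := congrArg Complex.re h
  have him := congrArg Complex.im h
  simp at hre him
  rcases him with h1 | h1
  · subst h1; simp at hre; linarith
  · rcases ht with h2 | h2
    · nlinarith [mul_nonneg hβ h2.le]
    · exact h2 h1

end RR

/-- The main induction: interlacing relations for the refined `γ`-polynomials. -/
lemma main_induction (t : ℂ) (ht : t ∈ Complex.slitPlane) (a c : ℕ → ℕ → ℂ)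
    (ha0 : a 0 0 = 1) (hc0 : c 0 0 = 0)
    (ha : ∀ n k, a (n + 1) k = ∑ j ∈ Finset.Ico k (n + 1), (a n j + c n j))
    (hc : ∀ n k, k ≤ n + 1 → c (n + 1) k = t * ∑ j ∈ Finset.Ico 0 k, a n j) (n : ℕ) :
    (∀ i j, i < j → j ≤ n → RR t (a n i) (a n j)) ∧
    (∀ i j, i ≤ n → j ≤ n → RR t (a n i) (c n j)) ∧
    (∀ i j, i < j → j ≤ n → RR t (a n i + c n i) (a n j + c n j)) ∧
    a n 0 ≠ 0 ∧ c n 0 = 0 := by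
  induction n with
  | zero =>
    refine ⟨by omega, ?_, by omega, by simp [ha0], hc0⟩
    intro i j hi hj
    obtain rfl : i = 0 := by omega
    obtain rfl : j = 0 := by omega
    rw [hc0]; exact RR.zero_right _ _
  | succ n ih =>
    obtain ⟨h1, h2, h3, h4, h5⟩ := ih
    have hab : ∀ i j, i < j → j ≤ n → RR t (a n i) (a n j + c n j) := fun i j hij hj =>
      (h1 i j hij hj).add_right (h2 i j (by omega) hj)
    refine ⟨?_, ?_, ?_, ?_, ?_⟩
    · intro i j hij hj
      rw [ha, ha, ← Finset.sum_Ico_consecutive _ hij.le hj]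
      refine RR.add_left (RR.sum_sum ?_) (RR.refl _ _)
      intro l hl m hm
      simp only [Finset.mem_Ico] at hl hm
      exact h3 l m (by omega) (by omega)
    · intro i k hi hk
      rw [ha, hc n k hk]
      apply RR.twist
      rcases le_or_gt k i with hki | hik
      · refine RR.sum_sum ?_
        intro l hl m hm
        simp only [Finset.mem_Ico] at hl hm
        exact hab l m (by omega) (by omega)
      · rw [← Finset.sum_Ico_consecutive _ (Nat.zero_le i) hik.le,
          ← Finset.sum_Ico_consecutive _ hik.le hk]
        refine RR.add_left (RR.add_right (RR.sum_sum ?_) (RR.sum_sum ?_))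
          (RR.add_right ?_ (RR.sum_sum ?_))
        · intro l hl m hm
          simp only [Finset.mem_Ico] at hl hm
          exact hab l m (by omega) (by omega)
        · intro l hl m hm
          simp only [Finset.mem_Ico] at hl hm
          exact hab l m (by omega) (by omega)
        · rw [Finset.sum_add_distrib]
          refine RR.add_right (RR.refl _ _) (RR.sum_sum ?_)
          intro l hl m hm
          simp only [Finset.mem_Ico] at hl hm
          exact h2 l m (by omega) (by omega)
        · intro l hl m hm
          simp only [Finset.mem_Ico] at hl hm
          exact hab l m (by omega) (by omega)
    · intro i j hij hj
      rw [ha, ha, hc n i (by omega), hc n j hj, ← Finset.sum_Ico_consecutive _ hij.le hj,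
        ← Finset.sum_Ico_consecutive _ (Nat.zero_le i) hij.le]
      set u := ∑ l ∈ Finset.Ico j (n + 1), (a n l + c n l) with hu
      set v := ∑ l ∈ Finset.Ico i j, (a n l + c n l) with hv
      set w := ∑ l ∈ Finset.Ico 0 i, a n l with hw
      set z := ∑ l ∈ Finset.Ico i j, a n l with hz
      have e1 : v + u + t * w = (u + t * w) + v := by ring
      have e2 : u + t * (w + z) = (u + t * w) + t * z := by ring
      rw [e1, e2]
      have hzu : RR t z u := RR.sum_sum fun l hl m hm => by
        simp only [Finset.mem_Ico] at hl hm
        exact hab l m (by omega) (by omega)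
      have hwz : RR t w z := RR.sum_sum fun l hl m hm => by
        simp only [Finset.mem_Ico] at hl hm
        exact h1 l m (by omega) (by omega)
      have hvu : RR t v u := RR.sum_sum fun l hl m hm => by
        simp only [Finset.mem_Ico] at hl hm
        exact h3 l m (by omega) (by omega)
      have hwv : RR t w v := RR.sum_sum fun l hl m hm => by
        simp only [Finset.mem_Ico] at hl hm
        exact hab l m (by omega) (by omega)
      have hzv : RR t z v := by
        rw [hv, Finset.sum_add_distrib]
        refine RR.add_right (RR.refl _ _) (RR.sum_sum fun l hl m hm => ?_)
        simp only [Finset.mem_Ico] at hl hm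
        exact h2 l m (by omega) (by omega)
      exact RR.add_left
        (RR.add_right (RR.refl _ _) (RR.add_left hzu.twist hwz.mul_both))
        (RR.add_right (RR.add_right hvu hwv.twist) hzv.twist)
    · rw [ha, Finset.sum_eq_sum_Ico_succ_bot (by omega)]
      refine RR.add_ne_zero ht (by simpa [h5] using h4) (RR.sum_right ?_)
      intro m hm
      simp only [Finset.mem_Ico] at hm
      exact h3 0 m (by omega) (by omega)
    · rw [hc n 0 (by omega)]; simp

/-- The conclusion at a point `t` of the slit plane for nonnegative combinations. -/
lemma main_point (t : ℂ) (ht : t ∈ Complex.slitPlane) (a c : ℕ → ℕ → ℂ)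
    (ha0 : a 0 0 = 1) (hc0 : c 0 0 = 0)
    (ha : ∀ n k, a (n + 1) k = ∑ j ∈ Finset.Ico k (n + 1), (a n j + c n j))
    (hc : ∀ n k, k ≤ n + 1 → c (n + 1) k = t * ∑ j ∈ Finset.Ico 0 k, a n j) (n : ℕ)
    (h : ℕ → ℝ) (hh : ∀ k, 0 ≤ h k) (hh0 : 0 < h 0) (F G : ℂ)
    (hF : F = ∑ k ∈ Finset.range (n + 1), (h k : ℂ) * a n k)
    (hG : G = ∑ k ∈ Finset.range (n + 1), (h k : ℂ) * (a n k + c n k)) :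
    F ≠ 0 ∧ G ≠ 0 ∧ RR t F G := by
  obtain ⟨h1, h2, h3, h4, h5⟩ := main_induction t ht a c ha0 hc0 ha hc n
  have hGF : G = F + ∑ k ∈ Finset.range (n + 1), (h k : ℂ) * c n k := by
    rw [hF, hG, ← Finset.sum_add_distrib]; exact Finset.sum_congr rfl fun k _ => by ring
  have hFc : RR t F (∑ k ∈ Finset.range (n + 1), (h k : ℂ) * c n k) := by
    rw [hF]
    refine RR.sum_sum fun i hi j hj => ?_
    simp only [Finset.mem_range] at hi hj
    exact ((h2 i j (by omega) (by omega)).smul_left _ (hh i)).smul_right _ (hh j)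
  have hF0 : F ≠ 0 := by
    rw [hF, Finset.range_eq_Ico, Finset.sum_eq_sum_Ico_succ_bot (by omega)]
    refine RR.add_ne_zero ht (mul_ne_zero (by exact_mod_cast hh0.ne') h4) (RR.sum_right ?_)
    intro m hm
    simp only [Finset.mem_Ico] at hm
    exact ((h1 0 m (by omega) (by omega)).smul_left _ (hh 0)).smul_right _ (hh m)
  refine ⟨hF0, ?_, ?_⟩
  · rw [hGF]; exact RR.add_ne_zero ht hF0 hFc
  · rw [hGF]; exact RR.add_right (RR.refl _ _) hFc

/-- Transfer from `t = x / (1+x)^2` to the upper half plane. -/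
lemma slit_of_im_pos (x : ℂ) (hx : 0 < x.im) : x / (1 + x) ^ 2 ∈ Complex.slitPlane := by
  have hx1 : (1 + x) ≠ 0 := by
    intro h; have := congrArg Complex.im h; simp at this; linarith
  by_contra hcon
  rw [Complex.mem_slitPlane_iff] at hcon
  push Not at hcon
  obtain ⟨hre, him⟩ := hcon
  set s := (x / (1 + x) ^ 2).re with hs
  have hts : x / (1 + x) ^ 2 = (s : ℂ) := by
    apply Complex.ext <;> simp [hs, him]
  have hxs : x = s * (1 + x) ^ 2 := by
    rw [← hts]; field_simp
  have r1 := congrArg Complex.re hxs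
  have r2 := congrArg Complex.im hxs
  simp [pow_two] at r1 r2
  have r3 : 1 = s * (2 * (1 + x.re)) := by
    have : x.im * 1 = x.im * (s * (2 * (1 + x.re))) := by linear_combination r2
    exact mul_left_cancel₀ hx.ne' this
  -- s * (1 + re) = 1/2
  have hneg : s < 0 := by
    rcases lt_or_eq_of_le hre with h | h
    · exact h
    · rw [h] at r3; norm_num at r3
  nlinarith [mul_pos hx hx, sq_nonneg (1 + x.re), mul_pos (neg_pos.mpr hneg) (mul_pos hx hx)]

lemma transfer_point (n : ℕ) (x F G : ℂ) (hx : 0 < x.im) (hF : F ≠ 0) (hG : G ≠ 0)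
    (h : RR (x / (1 + x) ^ 2) F G) :
    0 < (((1 + x) ^ (n + 1) * G) * (starRingEnd ℂ) ((1 + x) ^ n * F)).im := by
  have hx1 : (1 + x) ≠ 0 := by
    intro h; have := congrArg Complex.im h; simp at this; linarith
  obtain ⟨α, β, hα, hβ, h⟩ := h
  have e : ((1 + x) ^ (n + 1) * G) * (starRingEnd ℂ) ((1 + x) ^ n * F)
      = ((Complex.normSq ((1 + x) ^ n) : ℝ) : ℂ) * (α * (1 + x) + β * (x / (1 + x))) := by
    rw [map_mul, ← Complex.mul_conj]
    have : (α * (1 + x) + β * (x / (1 + x))) = (1 + x) * (G * (starRingEnd ℂ) F) := by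
      rw [h]; field_simp
    rw [this]; ring
  have e2 : (x / (1 + x)).im = x.im / Complex.normSq (1 + x) := by
    rw [Complex.div_im]; simp; ring
  have hn : 0 < Complex.normSq (1 + x) := Complex.normSq_pos.mpr hx1
  rw [e, Complex.im_ofReal_mul]
  refine mul_pos (Complex.normSq_pos.mpr (pow_ne_zero _ hx1)) ?_
  rw [Complex.add_im, Complex.im_ofReal_mul, Complex.im_ofReal_mul, e2]
  have p1 : 0 < (1 + x).im := by simpa using hx
  have p2 : 0 < x.im / Complex.normSq (1 + x) := div_pos hx hn
  rcases hα.lt_or_eq with hα' | hα'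
  · have := mul_pos hα' p1
    have := mul_nonneg hβ p2.le
    linarith
  · rcases hβ.lt_or_eq with hβ' | hβ'
    · have := mul_nonneg hα p1.le
      have := mul_pos hβ' p2
      linarith
    · exfalso
      rw [← hα', ← hβ'] at h
      simp [hF, hG] at h

section Interlacing

/-- Sum of the arctangents attached to a multiset of real roots. -/
noncomputable def thetaSum (c : ℝ) (M : Multiset ℝ) (s : ℝ) : ℝ :=
  (M.map (fun α => Real.arctan ((c - α) * s))).sum

lemma thetaSum_cons (c : ℝ) (M : Multiset ℝ) (a s : ℝ) :
    thetaSum c (a ::ₘ M) s = Real.arctan ((c - a) * s) + thetaSum c M s := by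
  simp [thetaSum]

lemma thetaSum_zero (c : ℝ) (M : Multiset ℝ) : thetaSum c M 0 = 0 := by
  simp [thetaSum]

lemma thetaSum_continuous (c : ℝ) (M : Multiset ℝ) : Continuous (thetaSum c M) := by
  induction M using Multiset.induction_on with
  | empty =>
    have : thetaSum c 0 = fun _ => 0 := funext fun s => by simp [thetaSum]
    rw [this]; exact continuous_const
  | cons a M ih =>
    have : thetaSum c (a ::ₘ M) = fun s => Real.arctan ((c - a) * s) + thetaSum c M s :=
      funext fun s => thetaSum_cons c M a s
    rw [this]
    exact (Real.continuous_arctan.comp (continuous_const.mul continuous_id)).add ih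

open Classical in
lemma thetaSum_tendsto (c : ℝ) (M : Multiset ℝ) (hc : c ∉ M) :
    Filter.Tendsto (thetaSum c M) Filter.atTop
      (nhds (Real.pi / 2 * ((M.card : ℝ) - 2 * (M.countP (fun α => c < α) : ℝ)))) := by
  induction M using Multiset.induction_on with
  | empty =>
    have : thetaSum c 0 = fun _ => 0 := funext fun s => by simp [thetaSum]
    rw [this]; simp
  | cons a M ih =>
    have hf : thetaSum c (a ::ₘ M) = fun s => Real.arctan ((c - a) * s) + thetaSum c M s :=
      funext fun s => thetaSum_cons c M a s
    simp only [Multiset.mem_cons, not_or] at hc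
    have ih := ih hc.2
    rw [hf]
    rcases lt_or_gt_of_ne hc.1 with h | h
    · have h1 : Filter.Tendsto (fun s : ℝ => Real.arctan ((c - a) * s)) Filter.atTop
          (nhds (-(Real.pi / 2))) :=
        (tendsto_nhds_of_tendsto_nhdsWithin Real.tendsto_arctan_atBot).comp
          (Filter.Tendsto.const_mul_atTop_of_neg (by linarith) Filter.tendsto_id)
      convert h1.add ih using 2
      rw [Multiset.countP_cons_of_pos _ h, Multiset.card_cons]
      push_cast; ring
    · have h1 : Filter.Tendsto (fun s : ℝ => Real.arctan ((c - a) * s)) Filter.atTop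
          (nhds (Real.pi / 2)) :=
        (tendsto_nhds_of_tendsto_nhdsWithin Real.tendsto_arctan_atTop).comp
          (Filter.Tendsto.const_mul_atTop (by linarith) Filter.tendsto_id)
      convert h1.add ih using 2
      rw [Multiset.countP_cons_of_neg _ (by linarith : ¬ c < a), Multiset.card_cons]
      push_cast; ring

lemma one_sub_I_mul (u : ℝ) :
    (1 : ℂ) - Complex.I * u = (Real.sqrt (1 + u ^ 2) : ℂ) * Complex.exp (-(Real.arctan u : ℂ) * Complex.I) := by
  have hs : 0 < Real.sqrt (1 + u ^ 2) := Real.sqrt_pos.mpr (by positivity)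
  rw [Complex.exp_mul_I, Complex.cos_neg, Complex.sin_neg, ← Complex.ofReal_cos,
    ← Complex.ofReal_sin, Real.cos_arctan, Real.sin_arctan]
  apply Complex.ext
  · simp; field_simp
  · simp; field_simp

lemma prod_polar (c y : ℝ) (hy : 0 < y) (M : Multiset ℝ) :
    ∃ r : ℝ, 0 < r ∧ (M.map (fun α : ℝ => ((c : ℂ) + y * Complex.I) - (α : ℂ))).prod
      = (Complex.I * y) ^ M.card * r * Complex.exp (-(thetaSum c M (1 / y) : ℂ) * Complex.I) := by
  induction M using Multiset.induction_on with
  | empty => exact ⟨1, one_pos, by simp [thetaSum]⟩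
  | cons a M ih =>
    obtain ⟨r, hr, ih⟩ := ih
    refine ⟨Real.sqrt (1 + ((c - a) * (1 / y)) ^ 2) * r,
      mul_pos (Real.sqrt_pos.mpr (by positivity)) hr, ?_⟩
    have e : ((c : ℂ) + y * Complex.I) - (a : ℂ)
        = (Complex.I * y) * (1 - Complex.I * (((c - a) * (1 / y) : ℝ) : ℂ)) := by
      have : (y : ℂ) ≠ 0 := by exact_mod_cast hy.ne'
      push_cast
      field_simp
      linear_combination ((c : ℂ) - a) * Complex.I_sq
    rw [Multiset.map_cons, Multiset.prod_cons, ih, e, one_sub_I_mul, thetaSum_cons,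
      Multiset.card_cons, pow_succ]
    have : (-((Real.arctan ((c - a) * (1 / y)) + thetaSum c M (1 / y) : ℝ) : ℂ)) * Complex.I
      = -(Real.arctan ((c - a) * (1 / y)) : ℂ) * Complex.I
        + -(thetaSum c M (1 / y) : ℂ) * Complex.I := by push_cast; ring
    rw [this, Complex.exp_add]
    push_cast
    ring

open Classical in
/-- Counting form of interlacing. -/
lemma count_interlace (M N : Multiset ℝ) (hcard : N.card = M.card + 1)
    (h : ∀ z : ℂ, 0 < z.im → 0 < ((N.map (fun α : ℝ => z - (α : ℂ))).prod
      * (starRingEnd ℂ) (M.map (fun α : ℝ => z - (α : ℂ))).prod).im)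
    (c : ℝ) (hcM : c ∉ M) (hcN : c ∉ N) :
    M.countP (fun α => c < α) ≤ N.countP (fun α => c < α) ∧
    N.countP (fun α => c < α) ≤ M.countP (fun α => c < α) + 1 := by
  set Θ : ℝ → ℝ := fun s => thetaSum c N s - thetaSum c M s with hΘ
  have hcont : Continuous Θ := (thetaSum_continuous c N).sub (thetaSum_continuous c M)
  have hcos : ∀ s, 0 < s → 0 < Real.cos (Θ s) := by
    intro s hs
    have hy : 0 < 1 / s := by positivity
    have h1 := h ((c : ℂ) + ((1 / s : ℝ) : ℂ) * Complex.I) (by simpa using hs)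
    obtain ⟨r, hr, e1⟩ := prod_polar c (1 / s) hy N
    obtain ⟨r', hr', e2⟩ := prod_polar c (1 / s) hy M
    rw [e1, e2, one_div_one_div] at h1
    set y := 1 / s with hyd
    have e3 : (Complex.I * y) ^ N.card * r * Complex.exp (-(thetaSum c N s : ℂ) * Complex.I)
        * (starRingEnd ℂ) ((Complex.I * y) ^ M.card * r' *
          Complex.exp (-(thetaSum c M s : ℂ) * Complex.I))
        = ((y ^ (2 * M.card + 1) * r * r' : ℝ) : ℂ) *
          (Complex.I * Complex.exp (-(Θ s : ℂ) * Complex.I)) := by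
      have : (-(Θ s : ℂ) * Complex.I) = (-(thetaSum c N s : ℂ) * Complex.I)
          + ((thetaSum c M s : ℂ) * Complex.I) := by
        simp only [hΘ]; push_cast; ring
      rw [this, Complex.exp_add, hcard]
      simp only [map_mul, map_pow, Complex.conj_I, Complex.conj_ofReal, ← Complex.exp_conj,
        map_neg]
      have e4 : (Complex.I * (y : ℂ)) ^ (M.card + 1) * (-Complex.I * (y : ℂ)) ^ M.card
          = Complex.I * (y : ℂ) ^ (2 * M.card + 1) := by
        have : (Complex.I * (y : ℂ)) * (-Complex.I * (y : ℂ)) = (y : ℂ) ^ 2 := by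
          linear_combination (-(y : ℂ) ^ 2) * Complex.I_sq
        rw [pow_succ, mul_right_comm, ← mul_pow, this, ← pow_mul]
        ring
      have e5 : -(thetaSum c M s : ℂ) * -Complex.I = (thetaSum c M s : ℂ) * Complex.I := by ring
      rw [e5]
      push_cast
      linear_combination (r * r' * Complex.exp (-(thetaSum c N s : ℂ) * Complex.I)
        * Complex.exp ((thetaSum c M s : ℂ) * Complex.I)) * e4
    rw [e3, Complex.im_ofReal_mul, Complex.exp_mul_I, Complex.cos_neg, Complex.sin_neg,
      ← Complex.ofReal_cos, ← Complex.ofReal_sin] at h1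
    have hp : 0 < y ^ (2 * M.card + 1) * r * r' := by positivity
    have := (mul_pos_iff_of_pos_left hp).mp h1
    simpa [-Complex.ofReal_cos, -Complex.ofReal_sin] using this
  have hΘ0 : Θ 0 = 0 := by simp [hΘ, thetaSum_zero]
  have hbound : ∀ s, 0 < s → |Θ s| ≤ Real.pi / 2 := by
    intro s hs
    by_contra hcon
    push Not at hcon
    have hc2 : ContinuousOn (fun s => |Θ s|) (Set.Icc 0 s) := hcont.abs.continuousOn
    have hmem : Real.pi / 2 ∈ Set.Icc (|Θ 0|) (|Θ s|) := by
      rw [hΘ0, abs_zero]; exact ⟨by positivity, hcon.le⟩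
    obtain ⟨s', hs', hs''⟩ := intermediate_value_Icc hs.le hc2 hmem
    have hs'' : |Θ s'| = Real.pi / 2 := hs''
    have hpos : 0 < s' := by
      rcases hs'.1.lt_or_eq with h | h
      · exact h
      · rw [← h, hΘ0, abs_zero] at hs''
        have := Real.pi_pos; linarith
    have := hcos s' hpos
    rw [← Real.cos_abs, hs'', Real.cos_pi_div_two] at this
    exact lt_irrefl _ this
  have hlim := ((thetaSum_tendsto c N hcN).sub (thetaSum_tendsto c M hcM)).abs
  have hle := le_of_tendsto hlim (Filter.eventually_atTop.mpr ⟨1, fun s hs =>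
    hbound s (by linarith)⟩)
  rw [hcard, ← mul_sub, abs_mul, abs_of_pos (by positivity : 0 < Real.pi / 2)] at hle
  have hle2 : |((M.card + 1 : ℕ) : ℝ) - 2 * (N.countP (fun α => c < α) : ℝ)
      - ((M.card : ℝ) - 2 * (M.countP (fun α => c < α) : ℝ))| ≤ 1 := by
    have hp : 0 < Real.pi / 2 := by positivity
    by_contra hcon
    push Not at hcon
    nlinarith
  rw [abs_le] at hle2
  push_cast at hle2
  constructor
  · have : (M.countP (fun α => c < α) : ℝ) ≤ (N.countP (fun α => c < α) : ℝ) := by linarith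
    exact_mod_cast this
  · have : (N.countP (fun α => c < α) : ℝ) ≤ (M.countP (fun α => c < α) : ℝ) + 1 := by linarith
    exact_mod_cast this

open Classical in
lemma countP_ge_of_lt (l : List ℝ) (hl : l.Pairwise (· ≥ ·)) (c : ℝ) (i : ℕ) (hi : i < l.length)
    (h : c < l[i]) : i + 1 ≤ l.countP (fun α => decide (c < α)) := by
  induction l generalizing i with
  | nil => simp at hi
  | cons a l ih =>
    rw [List.pairwise_cons] at hl
    cases i with
    | zero => simp at h; rw [List.countP_cons_of_pos (by simpa using h)]; omega
    | succ i =>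
      simp at h hi
      have := ih hl.2 i hi h
      have ha : c < a := lt_of_lt_of_le h (hl.1 _ (List.getElem_mem hi))
      rw [List.countP_cons_of_pos (by simpa using ha)]; omega

open Classical in
lemma countP_le_of_le (l : List ℝ) (hl : l.Pairwise (· ≥ ·)) (c : ℝ) (i : ℕ) (hi : i < l.length)
    (h : l[i] ≤ c) : l.countP (fun α => decide (c < α)) ≤ i := by
  induction l generalizing i with
  | nil => simp at hi
  | cons a l ih =>
    rw [List.pairwise_cons] at hl
    cases i with
    | zero =>
      simp at h
      rw [Nat.le_zero, List.countP_eq_zero]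
      intro b hb
      rcases List.mem_cons.mp hb with rfl | hb
      · simpa using h
      · simpa using le_trans (hl.1 b hb) h
    | succ i =>
      simp at h hi
      have := ih hl.2 i hi h
      rw [List.countP_cons]; split <;> omega

lemma descRoots_pairwise (f : ℝ[X]) : (descRoots f).Pairwise (· ≥ ·) := by
  unfold descRoots
  rw [List.pairwise_reverse]
  exact Multiset.pairwise_sort _ _

open Classical in
lemma descRoots_countP (f : ℝ[X]) (c : ℝ) :
    (descRoots f).countP (fun α => decide (c < α)) = f.roots.countP (fun α => c < α) := by
  unfold descRoots
  rw [List.countP_reverse]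
  conv_rhs => rw [← Multiset.sort_eq f.roots (· ≤ ·)]
  rw [Multiset.coe_countP]

lemma exists_between_notMem (M N : Multiset ℝ) (x y : ℝ) (h : x < y) :
    ∃ c, x < c ∧ c < y ∧ c ∉ M ∧ c ∉ N := by
  classical
  obtain ⟨c, hc, hc'⟩ := (Set.Ioo_infinite h).exists_notMem_finset (M.toFinset ∪ N.toFinset)
  refine ⟨c, hc.1, hc.2, ?_, ?_⟩ <;> · intro hh; apply hc'; simp [hh]

lemma realRooted_of_ne (f : ℝ[X])
    (h : ∀ z : ℂ, 0 < z.im → aeval z f ≠ 0) : RealRooted f := by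
  intro z hz
  have hz0 : aeval z f = 0 := by
    have := (Polynomial.mem_roots'.mp hz).2
    rwa [Polynomial.IsRoot, Polynomial.eval_map_algebraMap] at this
  rcases lt_trichotomy z.im 0 with h1 | h1 | h1
  · exfalso
    apply h ((starRingEnd ℂ) z) (by simpa using h1)
    rw [Polynomial.aeval_conj, hz0, map_zero]
  · exact h1
  · exact absurd hz0 (h z h1)

lemma splits_of_realRooted (f : ℝ[X]) (h : RealRooted f) : f.Splits := by
  refine Polynomial.Splits.of_splits_map (algebraMap ℝ ℂ) (IsAlgClosed.splits _) ?_
  intro a ha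
  exact ⟨a.re, by apply Complex.ext <;> simp [h a ha]⟩

lemma aeval_eq_prod (f : ℝ[X]) (hm : f.Monic) (h : f.Splits) (z : ℂ) :
    aeval z f = (f.roots.map (fun α : ℝ => z - (α : ℂ))).prod := by
  conv_lhs => rw [h.eq_prod_roots_of_monic hm]
  rw [map_multiset_prod, Multiset.map_map]
  simp

lemma interlaces_of_im_pos (f g : ℝ[X]) (hf : f.Monic) (hg : g.Monic)
    (hdeg : g.natDegree = f.natDegree + 1)
    (h : ∀ z : ℂ, 0 < z.im → 0 < (aeval z g * (starRingEnd ℂ) (aeval z f)).im) :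
    Interlaces f g := by
  classical
  have hfr : RealRooted f := realRooted_of_ne f fun z hz h0 => by
    have := h z hz; simp [h0] at this
  have hgr : RealRooted g := realRooted_of_ne g fun z hz h0 => by
    have := h z hz; simp [h0] at this
  have hfs := splits_of_realRooted f hfr
  have hgs := splits_of_realRooted g hgr
  have key := count_interlace f.roots g.roots
    (by rw [← hfs.natDegree_eq_card_roots, ← hgs.natDegree_eq_card_roots, hdeg])
    (fun z hz => by
      rw [← aeval_eq_prod f hf hfs, ← aeval_eq_prod g hg hgs]; exact h z hz)
  refine ⟨hfr, hgr, Or.inr (Or.inr (Or.inr ⟨Or.inr hdeg, ?_, ?_⟩))⟩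
  · intro i hi hi'
    by_contra hcon
    push Not at hcon
    obtain ⟨c, h1, h2, h3, h4⟩ := exists_between_notMem f.roots g.roots _ _ hcon
    have k := key c h3 h4
    rw [← descRoots_countP, ← descRoots_countP] at k
    have a1 := countP_ge_of_lt _ (descRoots_pairwise f) c i hi h2
    have a2 := countP_le_of_le _ (descRoots_pairwise g) c i hi' h1.le
    omega
  · intro i hi hi'
    by_contra hcon
    push Not at hcon
    obtain ⟨c, h1, h2, h3, h4⟩ := exists_between_notMem f.roots g.roots _ _ hcon
    have k := key c h3 h4
    rw [← descRoots_countP, ← descRoots_countP] at k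
    have a1 := countP_ge_of_lt _ (descRoots_pairwise g) c (i + 1) hi' h2
    have a2 := countP_le_of_le _ (descRoots_pairwise f) c i hi h1.le
    omega

end Interlacing

section Recursion

/-- Flag `f`-numbers `E_{n,k}(T)` of the refined Eulerian type, defined recursively. -/
def EE : ℕ → ℕ → Finset ℕ → ℤ
  | 0, k, _ => if k = 0 then 1 else 0
  | n + 1, k, T =>
    if n + 1 ∈ T then ∑ j ∈ Finset.Ico 0 (n + 1), EE n j (T.erase (n + 1))
    else ∑ j ∈ Finset.Ico k (n + 1), EE n j T

lemma EE_succ_notMem (n k : ℕ) (T : Finset ℕ) (h : n + 1 ∉ T) :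
    EE (n + 1) k T = ∑ j ∈ Finset.Ico k (n + 1), EE n j T := by
  rw [EE, if_neg h]

lemma EE_succ_insert (n k : ℕ) (T : Finset ℕ) (h : n + 1 ∉ T) :
    EE (n + 1) k (insert (n + 1) T) = ∑ j ∈ Finset.Ico 0 (n + 1), EE n j T := by
  rw [EE, if_pos (Finset.mem_insert_self _ _), Finset.erase_insert h]

/-- Flag `h`-numbers. -/
def DD (n k : ℕ) (S : Finset ℕ) : ℤ :=
  ∑ T ∈ S.powerset, (-1) ^ ((S \ T).card) * EE n k T

lemma DD_empty_zero : DD 0 0 ∅ = 1 := by simp [DD, EE]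

lemma DD_succ_notMem (n k : ℕ) (S : Finset ℕ) (h : n + 1 ∉ S) :
    DD (n + 1) k S = ∑ j ∈ Finset.Ico k (n + 1), DD n j S := by
  unfold DD
  rw [Finset.sum_comm]
  refine Finset.sum_congr rfl fun T hT => ?_
  rw [EE_succ_notMem _ _ _ (fun hh => h (Finset.mem_powerset.mp hT hh)), Finset.mul_sum]

lemma DD_succ_insert (n k : ℕ) (hk : k ≤ n + 1) (S : Finset ℕ) (h : n + 1 ∉ S) :
    DD (n + 1) k (insert (n + 1) S) = ∑ j ∈ Finset.Ico 0 k, DD n j S := by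
  unfold DD
  rw [Finset.sum_powerset_insert h, Finset.sum_comm, ← Finset.sum_add_distrib]
  refine Finset.sum_congr rfl fun T hT => ?_
  have hT' : n + 1 ∉ T := fun hh => h (Finset.mem_powerset.mp hT hh)
  rw [EE_succ_notMem _ _ _ hT', EE_succ_insert _ _ _ hT', Finset.insert_sdiff_of_notMem _ hT',
    Finset.card_insert_of_notMem (by simp [h]), Finset.insert_sdiff_insert,
    Finset.sdiff_insert_of_notMem h, ← Finset.mul_sum,
    ← Finset.sum_Ico_consecutive _ (Nat.zero_le k) hk, pow_succ]
  ring

/-- Generating function over isolated subsets of `{1, …, n-1}`. -/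
noncomputable def aSeq (t : ℂ) (n k : ℕ) : ℂ :=
  ∑ S ∈ (Finset.Ico 1 n).powerset.filter IsolatedSet, (DD n k S : ℂ) * t ^ S.card

/-- Generating function over isolated subsets of `{1, …, n}`. -/
noncomputable def bSeq (t : ℂ) (n k : ℕ) : ℂ :=
  ∑ S ∈ (Finset.Ico 1 (n + 1)).powerset.filter IsolatedSet, (DD n k S : ℂ) * t ^ S.card

lemma aSeq_succ (t : ℂ) (n k : ℕ) :
    aSeq t (n + 1) k = ∑ j ∈ Finset.Ico k (n + 1), bSeq t n j := by
  unfold aSeq bSeq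
  rw [Finset.sum_comm]
  refine Finset.sum_congr rfl fun S hS => ?_
  have hS' : n + 1 ∉ S := fun hh => by
    have := Finset.mem_powerset.mp (Finset.mem_filter.mp hS).1 hh
    simp at this
  rw [DD_succ_notMem _ _ _ hS']
  push_cast
  rw [Finset.sum_mul]

lemma isolated_insert_filter (n : ℕ) :
    (Finset.Ico 1 (n + 1)).powerset.filter (fun S => IsolatedSet (insert (n + 1) S))
      = (Finset.Ico 1 n).powerset.filter IsolatedSet := by
  ext S
  simp only [Finset.mem_filter, Finset.mem_powerset]
  constructor
  · rintro ⟨hS, hI⟩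
    refine ⟨fun x hx => ?_, fun i hi hi' => hI i (by simp [hi]) (by simp [hi'])⟩
    have h1 := Finset.mem_Ico.mp (hS hx)
    have h2 : x ≠ n := by
      rintro rfl
      exact hI x (by simp [hx]) (by simp)
    exact Finset.mem_Ico.mpr (by omega)
  · rintro ⟨hS, hI⟩
    refine ⟨fun x hx => ?_, ?_⟩
    · have h1 := Finset.mem_Ico.mp (hS hx)
      exact Finset.mem_Ico.mpr (by omega)
    · intro i hi hi'
      rcases Finset.mem_insert.mp hi with rfl | hi
      · rcases Finset.mem_insert.mp hi' with h | h
        · omega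
        · have := Finset.mem_Ico.mp (hS h); omega
      · rcases Finset.mem_insert.mp hi' with h | h
        · have := Finset.mem_Ico.mp (hS hi); omega
        · exact hI i hi h

lemma bSeq_succ (t : ℂ) (n k : ℕ) (hk : k ≤ n + 1) :
    bSeq t (n + 1) k = aSeq t (n + 1) k + t * ∑ j ∈ Finset.Ico 0 k, aSeq t n j := by
  have hmem : n + 1 ∉ Finset.Ico 1 (n + 1) := by simp
  have hins : Finset.Ico 1 (n + 1 + 1) = insert (n + 1) (Finset.Ico 1 (n + 1)) := by
    ext x; simp only [Finset.mem_Ico, Finset.mem_insert]; omega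
  unfold bSeq
  rw [hins, Finset.sum_filter, Finset.sum_powerset_insert hmem, ← Finset.sum_filter,
    ← Finset.sum_filter, isolated_insert_filter]
  congr 1
  unfold aSeq
  rw [Finset.sum_comm, Finset.mul_sum]
  refine Finset.sum_congr rfl fun S hS => ?_
  have hS' : n + 1 ∉ S := fun hh => by
    have := Finset.mem_powerset.mp (Finset.mem_filter.mp hS).1 hh
    simp at this
  rw [DD_succ_insert _ _ hk _ hS', Finset.card_insert_of_notMem hS']
  push_cast
  rw [Finset.sum_mul, Finset.mul_sum]
  exact Finset.sum_congr rfl fun j _ => by ring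

lemma EE_empty (n k : ℕ) : EE n k ∅ = if k = 0 then 1 else 0 := by
  induction n generalizing k with
  | zero => rfl
  | succ n ih =>
    rw [EE_succ_notMem _ _ _ (by simp)]
    simp only [ih]
    rw [Finset.sum_ite_eq' (Finset.Ico k (n + 1)) 0 (fun _ => (1 : ℤ))]
    simp

lemma hockey (d N r k : ℕ) (h : k + r = N + 1) :
    ∑ j ∈ Finset.Ico k (N + 1), ((N - j).choose d : ℤ) = ((N + 1 - k).choose (d + 1) : ℤ) := by
  induction r generalizing k with
  | zero => simp [show k = N + 1 by omega]
  | succ r ih =>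
    rw [Finset.sum_eq_sum_Ico_succ_bot (by omega), ih (k + 1) (by omega),
      show N + 1 - k = r + 1 by omega, show N - k = r by omega,
      show N + 1 - (k + 1) = r by omega, Nat.choose_succ_succ]
    push_cast; ring

/-- Multinomial numbers. -/
def MM (m : ℕ) (T : Finset ℕ) : ℤ := ∑ j ∈ Finset.Ico 0 m, EE (m - 1) j T

lemma EE_max (p d k : ℕ) (T : Finset ℕ) (hT : ∀ x ∈ T, x < p + 1) (hk : k ≤ p + 1 + d) :
    EE (p + 1 + d) k (insert (p + 1) T) = ((p + 1 + d - k).choose d : ℤ) * MM (p + 1) T := by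
  induction d generalizing k with
  | zero =>
    rw [add_zero, EE_succ_insert _ _ _ (fun h => lt_irrefl _ (hT _ h))]
    simp [MM]
  | succ d ih =>
    rw [show p + 1 + (d + 1) = (p + 1 + d) + 1 by ring, EE_succ_notMem]
    · rw [Finset.sum_congr rfl fun j hj => ih j (by
        have := (Finset.mem_Ico.mp hj).2; omega), ← Finset.sum_mul,
        hockey d (p + 1 + d) (p + 1 + d + 1 - k) k (by omega)]
    · intro h
      rcases Finset.mem_insert.mp h with h | h
      · omega
      · have := hT _ h; omega

lemma MM_insert (m q : ℕ) (T : Finset ℕ) (hq : 0 < q) (hqm : q < m) (hT : ∀ x ∈ T, x < q) :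
    MM m (insert q T) = (m.choose q : ℤ) * MM q T := by
  obtain ⟨p, rfl⟩ : ∃ p, q = p + 1 := ⟨q - 1, by omega⟩
  obtain ⟨d, rfl⟩ : ∃ d, m = p + 1 + d + 1 := ⟨m - (p + 2), by omega⟩
  rw [MM, Nat.add_sub_cancel, Finset.sum_congr rfl fun j hj => EE_max p d j T hT (by
        have := (Finset.mem_Ico.mp hj).2; omega), ← Finset.sum_mul,
        hockey d (p + 1 + d) (p + 1 + d + 1) 0 (by omega), Nat.sub_zero]
  congr 2
  exact Nat.choose_symm_of_eq_add (by omega)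

lemma MM_empty (m : ℕ) (hm : 0 < m) : MM m ∅ = 1 := by
  unfold MM
  simp only [EE_empty]
  rw [Finset.sum_ite_eq' (Finset.Ico 0 m) 0 (fun _ => (1 : ℤ))]
  simp [hm]

end Recursion

section PosetCount

variable {P : Type*} [Fintype P] [PartialOrder P] [OrderBot P]

lemma rank_iso {n : ℕ} {rk : P → ℕ} (hrk : IsRankFunction rk) {m : P}
    (e : Set.Icc (⊥ : P) m ≃o Finset (Fin n)) (s : Finset (Fin n)) :
    rk (e.symm s).1 = s.card := by
  induction s using Finset.induction_on with
  | empty =>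
    have : (e.symm ∅).1 = ⊥ := by
      have h : e.symm ∅ ≤ ⟨⊥, le_rfl, bot_le⟩ := by
        rw [OrderIso.symm_apply_le]; exact Finset.empty_subset _
      exact le_bot_iff.mp h
    rw [this, hrk.1]; rfl
  | insert a s ha ih =>
    have hc : (e.symm s) ⋖ (e.symm (insert a s)) := by
      rw [apply_covBy_apply_iff]; exact Finset.covBy_insert ha
    have hc' : (e.symm s).1 ⋖ (e.symm (insert a s)).1 := by
      refine ⟨hc.1, fun z hz1 hz2 => ?_⟩
      exact hc.2 (c := ⟨z, bot_le, hz2.le.trans (e.symm (insert a s)).2.2⟩) hz1 hz2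
    rw [hrk.2 _ _ hc', ih, Finset.card_insert_of_notMem ha]

lemma rank_eq_card {n : ℕ} {rk : P → ℕ} (hrk : IsRankFunction rk) {m : P}
    (e : Set.Icc (⊥ : P) m ≃o Finset (Fin n)) (y : Set.Icc (⊥ : P) m) :
    rk y.1 = (e y).card := by
  rw [← rank_iso hrk e, e.symm_apply_apply]

lemma exists_iso {n : ℕ} (hsimp : SimplicialOfRank P n) (x : P) :
    ∃ m, x ≤ m ∧ Nonempty (Set.Icc (⊥ : P) m ≃o Finset (Fin n)) := by
  obtain ⟨m, hxm, hm⟩ := (Set.toFinite (Set.univ : Set P)).exists_le_maximal (Set.mem_univ x)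
  exact ⟨m, hxm, hsimp m fun y hy => hm.2 (Set.mem_univ y) hy⟩

lemma rk_lt {n : ℕ} {rk : P → ℕ} (hrk : IsRankFunction rk) (hsimp : SimplicialOfRank P n)
    {x y : P} (h : y < x) : rk y < rk x := by
  obtain ⟨m, hxm, ⟨e⟩⟩ := exists_iso hsimp x
  have h1 := rank_eq_card hrk e ⟨y, bot_le, h.le.trans hxm⟩
  have h2 := rank_eq_card hrk e ⟨x, bot_le, hxm⟩
  simp only at h1 h2
  rw [h1, h2]
  apply Finset.card_lt_card
  exact e.lt_iff_lt.mpr h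

open Classical in
lemma count_below {n : ℕ} {rk : P → ℕ} (hrk : IsRankFunction rk) (hsimp : SimplicialOfRank P n)
    (x : P) (j : ℕ) :
    (Finset.univ.filter (fun y : P => y ≤ x ∧ rk y = j)).card = (rk x).choose j := by
  obtain ⟨m, hxm, ⟨e⟩⟩ := exists_iso hsimp x
  have h2 := rank_eq_card hrk e ⟨x, bot_le, hxm⟩
  simp only at h2
  rw [h2, ← Finset.card_powersetCard]
  symm
  refine Finset.card_bij (fun s _ => (e.symm s).1) ?_ ?_ ?_
  · intro s hs
    rw [Finset.mem_powersetCard] at hs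
    simp only [Finset.mem_filter, Finset.mem_univ, true_and]
    refine ⟨?_, by rw [rank_iso hrk e, hs.2]⟩
    have : e.symm s ≤ ⟨x, bot_le, hxm⟩ := by rw [OrderIso.symm_apply_le]; exact hs.1
    exact this
  · intro s _ s' _ h
    exact e.symm.injective (Subtype.ext h)
  · intro y hy
    simp only [Finset.mem_filter, Finset.mem_univ, true_and] at hy
    refine ⟨e ⟨y, bot_le, hy.1.trans hxm⟩, ?_, by simp⟩
    rw [Finset.mem_powersetCard, ← rank_eq_card hrk e]
    refine ⟨?_, hy.2⟩
    exact e.le_iff_le.mpr hy.1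

open Classical in
/-- Number of chains with rank set `T` all of whose elements satisfy `Q`. -/
noncomputable def cnt (rk : P → ℕ) (Q : P → Prop) (T : Finset ℕ) : ℕ :=
  (Finset.univ.filter (fun c : Finset P =>
    (IsChain (· ≤ ·) (c : Set P) ∧ (⊥ : P) ∉ c ∧ c.image rk = T) ∧ ∀ y ∈ c, Q y)).card

open Classical in
lemma flagF_eq_cnt (rk : P → ℕ) (T : Finset ℕ) : flagF rk T = cnt rk (fun _ => True) T := by
  unfold flagF cnt
  rw [Nat.card_eq_fintype_card, Fintype.card_subtype]
  congr 1
  ext c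
  simp only [Finset.mem_filter, Finset.mem_univ, true_and, implies_true, and_true]

lemma cnt_empty (rk : P → ℕ) (Q : P → Prop) : cnt rk Q ∅ = 1 := by
  classical
  unfold cnt
  rw [Finset.card_eq_one]
  refine ⟨∅, ?_⟩
  ext c
  simp only [Finset.mem_filter, Finset.mem_univ, true_and, Finset.image_eq_empty,
    Finset.mem_singleton]
  constructor
  · exact fun h => h.1.2.2
  · rintro rfl; simp

open Classical in
lemma cnt_insert {n : ℕ} {rk : P → ℕ} (hrk : IsRankFunction rk) (hsimp : SimplicialOfRank P n)
    (Q : P → Prop) (hQ : ∀ x y, y ≤ x → Q x → Q y) (m : ℕ) (hm : 0 < m) (T : Finset ℕ)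
    (hT : ∀ t ∈ T, t < m) :
    cnt rk Q (insert m T)
      = ∑ y ∈ Finset.univ.filter (fun y : P => Q y ∧ rk y = m), cnt rk (fun z => z < y) T := by
  unfold cnt
  rw [← Finset.card_sigma]
  symm
  have hmT : m ∉ T := fun h => lt_irrefl _ (hT m h)
  refine Finset.card_bij (fun p _ => insert p.1 p.2) ?_ ?_ ?_
  · rintro ⟨y, c⟩ hp
    simp only [Finset.mem_sigma, Finset.mem_filter, Finset.mem_univ, true_and] at hp ⊢
    obtain ⟨⟨hQy, hy⟩, ⟨hc, hbot, him⟩, hlt⟩ := hp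
    refine ⟨⟨?_, ?_, ?_⟩, ?_⟩
    · rw [Finset.coe_insert]
      exact hc.insert fun b hb _ => Or.inr (hlt b hb).le
    · rw [Finset.mem_insert, not_or]
      refine ⟨?_, hbot⟩
      rintro rfl
      rw [hrk.1] at hy; omega
    · rw [Finset.image_insert, him, hy]
    · intro z hz
      rcases Finset.mem_insert.mp hz with rfl | hz
      · exact hQy
      · exact hQ _ _ (hlt z hz).le hQy
  · rintro ⟨y, c⟩ hp ⟨y', c'⟩ hp' heq
    simp only [Finset.mem_sigma, Finset.mem_filter, Finset.mem_univ, true_and] at hp hp' heq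
    obtain ⟨⟨hQy, hy⟩, ⟨hc, hbot, him⟩, hlt⟩ := hp
    obtain ⟨⟨hQy', hy'⟩, ⟨hc', hbot', him'⟩, hlt'⟩ := hp'
    have hyy : y = y' := by
      have : y ∈ insert y' c' := heq ▸ Finset.mem_insert_self _ _
      rcases Finset.mem_insert.mp this with h | h
      · exact h
      · have := rk_lt hrk hsimp (hlt' y h); omega
    subst hyy
    have hcc : c = c' := by
      rw [← Finset.erase_insert (fun h => lt_irrefl _ (hlt y h)), heq,
        Finset.erase_insert (fun h => lt_irrefl _ (hlt' y h))]
    subst hcc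
    rfl
  · intro c hp
    simp only [Finset.mem_filter, Finset.mem_univ, true_and] at hp
    obtain ⟨⟨hc, hbot, him⟩, hQc⟩ := hp
    obtain ⟨y, hyc, hy⟩ : ∃ y ∈ c, rk y = m := by
      have : m ∈ c.image rk := him ▸ Finset.mem_insert_self _ _
      exact Finset.mem_image.mp this
    have hlt : ∀ z ∈ c.erase y, z < y := by
      intro z hz
      obtain ⟨hzy, hzc⟩ := Finset.mem_erase.mp hz
      rcases hc hzc hyc hzy with h | h
      · exact lt_of_le_of_ne h hzy
      · have h1 := rk_lt hrk hsimp (lt_of_le_of_ne h (Ne.symm hzy))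
        have h2 : rk z ∈ insert m T := him ▸ Finset.mem_image_of_mem rk hzc
        rcases Finset.mem_insert.mp h2 with h2 | h2
        · omega
        · have := hT _ h2; omega
    refine ⟨⟨y, c.erase y⟩, ?_, Finset.insert_erase hyc⟩
    simp only [Finset.mem_sigma, Finset.mem_filter, Finset.mem_univ, true_and]
    refine ⟨⟨hQc y hyc, hy⟩, ⟨?_, ?_, ?_⟩, hlt⟩
    · exact hc.mono (by simp)
    · exact fun h => hbot (Finset.mem_of_mem_erase h)
    · ext t
      rw [Finset.mem_image]
      constructor
      · rintro ⟨z, hz, rfl⟩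
        have h2 : rk z ∈ insert m T :=
          him ▸ Finset.mem_image_of_mem rk (Finset.mem_of_mem_erase hz)
        have := rk_lt hrk hsimp (hlt z hz)
        rcases Finset.mem_insert.mp h2 with h2 | h2
        · omega
        · exact h2
      · intro ht
        have : t ∈ c.image rk := him ▸ Finset.mem_insert_of_mem ht
        obtain ⟨z, hz, rfl⟩ := Finset.mem_image.mp this
        refine ⟨z, Finset.mem_erase.mpr ⟨?_, hz⟩, rfl⟩
        rintro rfl
        have := hT _ ht; omega

lemma cnt_below {n : ℕ} {rk : P → ℕ} (hrk : IsRankFunction rk) (hsimp : SimplicialOfRank P n)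
    (T : Finset ℕ) : ∀ x : P, 0 < rk x → (∀ t ∈ T, 0 < t ∧ t < rk x) →
      (cnt rk (fun z => z < x) T : ℤ) = MM (rk x) T := by
  classical
  induction T using Finset.induction_on_max with
  | empty => intro x hx _; rw [cnt_empty, MM_empty _ hx]; rfl
  | insert m T hmax ih =>
    intro x hx hT
    have hm := hT m (Finset.mem_insert_self _ _)
    rw [cnt_insert hrk hsimp (fun z => z < x) (fun a b hab hb => lt_of_le_of_lt hab hb) m hm.1 T
      hmax, MM_insert _ _ _ hm.1 hm.2 hmax]
    push_cast
    have hs : Finset.univ.filter (fun y : P => y < x ∧ rk y = m)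
        = Finset.univ.filter (fun y : P => y ≤ x ∧ rk y = m) := by
      ext y
      simp only [Finset.mem_filter, Finset.mem_univ, true_and]
      refine ⟨fun h => ⟨h.1.le, h.2⟩, fun h => ⟨lt_of_le_of_ne h.1 ?_, h.2⟩⟩
      rintro rfl
      omega
    rw [← count_below hrk hsimp x m, ← hs, Finset.card_eq_sum_ones, Nat.cast_sum, Finset.sum_mul]
    refine Finset.sum_congr rfl fun y hy => ?_
    simp only [Finset.mem_filter, Finset.mem_univ, true_and] at hy
    rw [ih y (by omega) (fun t ht => ⟨(hT t (Finset.mem_insert_of_mem ht)).1, by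
      rw [hy.2]; exact hmax t ht⟩), hy.2]
    simp

/-- The inverse relation expressing the `f`-vector by the `h`-vector. -/
lemma fvec_eq (rk : P → ℕ) (n m : ℕ) (hm : m ≤ n) :
    (fvec rk m : ℤ) = ∑ k ∈ Finset.range (n + 1), hvec rk n k * ((n - k).choose (n - m) : ℤ) := by
  -- the linear functional `p ↦ ∑ p_k C(n-k, n-m)`
  have key : ∀ i ∈ Finset.range (n + 1),
      ∑ k ∈ Finset.range (n + 1),
        ((X ^ i * (1 - X) ^ (n - i) : ℤ[X]).coeff k) * ((n - k).choose (n - m) : ℤ)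
        = if i = m then 1 else 0 := by
    intro i hi
    have hi : i ≤ n := by simpa [Nat.lt_succ_iff] using hi
    have h1 : ∑ k ∈ Finset.range (n + 1),
        C ((X ^ i * (1 - X) ^ (n - i) : ℤ[X]).coeff k) * (1 + X : ℤ[X]) ^ (n - k) = X ^ (n - i) := by
      have hc : ∀ k, (X ^ i * (1 - X) ^ (n - i) : ℤ[X]).coeff k
          = if i ≤ k then (-1) ^ (k - i) * ((n - i).choose (k - i) : ℤ) else 0 := by
        intro k
        rw [Polynomial.coeff_X_pow_mul']
        split_ifs with hik
        · have : (1 - X : ℤ[X]) ^ (n - i) = ((1 + X : ℤ[X]) ^ (n - i)).comp (C (-1) * X) := by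
            simp [sub_eq_add_neg]
          rw [this, Polynomial.comp_C_mul_X_coeff, Polynomial.coeff_one_add_X_pow]; ring
        · rfl
      have hsplit : Finset.range (n + 1) = Finset.Ico 0 (n + 1) := Finset.range_eq_Ico _
      rw [hsplit, ← Finset.sum_Ico_consecutive _ (Nat.zero_le i) (by omega : i ≤ n + 1)]
      rw [Finset.sum_eq_zero, zero_add, Finset.sum_Ico_eq_sum_range]
      · have hb : (X : ℤ[X]) ^ (n - i) = (-1 + (1 + X)) ^ (n - i) := by ring
        rw [hb, add_pow, show n + 1 - i = n - i + 1 by omega]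
        refine Finset.sum_congr rfl fun l hl => ?_
        rw [hc, if_pos (by omega), show i + l - i = l by omega, show n - (i + l) = n - i - l by omega]
        simp only [map_mul, map_pow, map_neg, map_one, map_natCast]
        push_cast
        ring
      · intro k hk
        rw [hc, if_neg (by have := (Finset.mem_Ico.mp hk).2; omega)]; simp
    have h2 := congrArg (fun p : ℤ[X] => p.coeff (n - m)) h1
    simp only [Polynomial.finsetSum_coeff, Polynomial.coeff_C_mul,
      Polynomial.coeff_one_add_X_pow, Polynomial.coeff_X_pow] at h2
    rw [h2]
    by_cases h : i = m
    · simp [h]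
    · rw [if_neg h, if_neg (by omega)]
  unfold hvec hPoly
  simp only [Polynomial.finsetSum_coeff, mul_assoc, Polynomial.coeff_C_mul, Finset.sum_mul]
  rw [Finset.sum_comm]
  simp only [← Finset.mul_sum]
  rw [Finset.sum_congr rfl fun i hi => by rw [key i hi]]
  simp only [mul_ite, mul_one, mul_zero]
  rw [Finset.sum_ite_eq' (Finset.range (n + 1)) m (fun i => (fvec rk i : ℤ))]
  simp [Nat.lt_succ_iff, hm]

lemma hvec_zero {n : ℕ} {rk : P → ℕ} (hrk : IsRankFunction rk) (hsimp : SimplicialOfRank P n) :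
    hvec rk n 0 = 1 := by
  have h := fvec_eq rk n 0 (Nat.zero_le n)
  have h1 : fvec rk 0 = 1 := by
    classical
    unfold fvec
    rw [Finset.card_eq_one]
    refine ⟨⊥, ?_⟩
    ext x
    simp only [Finset.mem_filter, Finset.mem_univ, true_and, Finset.mem_singleton]
    constructor
    · intro hx
      by_contra hne
      have := rk_lt hrk hsimp (bot_lt_iff_ne_bot.mpr hne)
      omega
    · rintro rfl; exact hrk.1
  rw [h1, Finset.sum_eq_single 0] at h
  · simpa using h.symm
  · intro k hk hk0
    rw [Nat.choose_eq_zero_of_lt (by have := Finset.mem_range.mp hk; omega)]; simp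
  · simp

lemma flagF_eq {n : ℕ} {rk : P → ℕ} (hrk : IsRankFunction rk) (hsimp : SimplicialOfRank P n)
    (T : Finset ℕ) (hT : T ⊆ Finset.Ico 1 (n + 1)) :
    (flagF rk T : ℤ) = ∑ k ∈ Finset.range (n + 1), hvec rk n k * EE n k T := by
  classical
  induction T using Finset.induction_on_max with
  | empty =>
    rw [flagF_eq_cnt, cnt_empty]
    simp only [EE_empty, mul_ite, mul_one, mul_zero]
    rw [Finset.sum_ite_eq' (Finset.range (n + 1)) 0 (fun i => (hvec rk n i : ℤ))]
    simp [hvec_zero hrk hsimp]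
  | insert m T hmax ih =>
    have hm := Finset.mem_Ico.mp (hT (Finset.mem_insert_self _ _))
    have hpos : ∀ t ∈ T, 0 < t := fun t ht =>
      (Finset.mem_Ico.mp (hT (Finset.mem_insert_of_mem ht))).1
    rw [flagF_eq_cnt, cnt_insert hrk hsimp _ (fun _ _ _ h => h) m (by omega) T hmax]
    push_cast
    rw [Finset.sum_congr rfl (g := fun _ => MM m T) fun y hy => by
      simp only [Finset.mem_filter, Finset.mem_univ, true_and] at hy
      rw [cnt_below hrk hsimp T y (by omega) (fun t ht => ⟨hpos t ht, by
        rw [hy]; exact hmax t ht⟩), hy]]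
    obtain ⟨p, rfl⟩ : ∃ p, m = p + 1 := ⟨m - 1, by omega⟩
    obtain ⟨d, rfl⟩ : ∃ d, n = p + 1 + d := ⟨n - (p + 1), by omega⟩
    have hR : ∑ k ∈ Finset.range (p + 1 + d + 1), hvec rk (p + 1 + d) k *
          EE (p + 1 + d) k (insert (p + 1) T)
        = (∑ k ∈ Finset.range (p + 1 + d + 1), hvec rk (p + 1 + d) k *
          ((p + 1 + d - k).choose d : ℤ)) * MM (p + 1) T := by
      rw [Finset.sum_mul]
      refine Finset.sum_congr rfl fun k hk => ?_
      rw [EE_max p d k T hmax (by have := Finset.mem_range.mp hk; omega), ← mul_assoc]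
    rw [hR, Finset.sum_const, nsmul_eq_mul]
    congr 1
    have := fvec_eq rk (p + 1 + d) (p + 1) (by omega)
    rw [show p + 1 + d - (p + 1) = d by omega] at this
    rw [← this]
    unfold fvec
    congr 2
    ext y; simp

lemma flagH_eq {n : ℕ} {rk : P → ℕ} (hrk : IsRankFunction rk) (hsimp : SimplicialOfRank P n)
    (S : Finset ℕ) (hS : S ⊆ Finset.Ico 1 (n + 1)) :
    flagH rk S = ∑ k ∈ Finset.range (n + 1), hvec rk n k * DD n k S := by
  unfold flagH DD
  simp only [Finset.mul_sum]
  rw [Finset.sum_comm]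
  refine Finset.sum_congr rfl fun T hT => ?_
  rw [flagF_eq hrk hsimp T ((Finset.mem_powerset.mp hT).trans hS), Finset.mul_sum]
  exact Finset.sum_congr rfl fun k _ => by ring

lemma isolated_card (n : ℕ) (S : Finset ℕ) (hS : S ⊆ Finset.Ico 1 (n + 1)) (hI : IsolatedSet S) :
    2 * S.card ≤ n + 1 := by
  have hd : Disjoint S (S.image (· + 1)) := by
    rw [Finset.disjoint_left]
    intro a ha ha'
    obtain ⟨b, hb, rfl⟩ := Finset.mem_image.mp ha'
    exact hI b hb ha
  have hsub : S ∪ S.image (· + 1) ⊆ Finset.Ico 1 (n + 2) := by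
    intro a ha
    rcases Finset.mem_union.mp ha with h | h
    · have := Finset.mem_Ico.mp (hS h); exact Finset.mem_Ico.mpr (by omega)
    · obtain ⟨b, hb, rfl⟩ := Finset.mem_image.mp h
      have := Finset.mem_Ico.mp (hS hb); exact Finset.mem_Ico.mpr (by omega)
  have := Finset.card_le_card hsub
  rw [Finset.card_union_of_disjoint hd,
    Finset.card_image_of_injective _ (add_left_injective 1), Nat.card_Ico] at this
  omega

/-- The general shape of all the polynomials. -/
noncomputable def genPoly (rk : P → ℕ) (N : ℕ) (A : Finset ℕ) : ℝ[X] :=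
  ∑ S ∈ A.powerset.filter IsolatedSet,
    (flagH rk S : ℝ) • (X ^ S.card * (1 + X) ^ (N - 2 * S.card))

lemma chowAug_eq (rk : P → ℕ) (n : ℕ) :
    chowAugPoly rk n = genPoly rk (n + 1) (Finset.Ico 1 (n + 1)) := by
  unfold chowAugPoly genPoly
  rw [show Finset.Icc 1 n = Finset.Ico 1 (n + 1) by ext; simp [Nat.lt_succ_iff]]

lemma refl_image (n a b a' b' : ℕ) (S : Finset ℕ) (hS : S ⊆ Finset.Ico a b) (hb : b ≤ n + 1)
    (h1 : a' + b ≤ n + 2) (h2 : n + 2 ≤ b' + a) (hI : IsolatedSet S) :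
    S.image (fun s => n + 1 - s) ⊆ Finset.Ico a' b' ∧
    IsolatedSet (S.image (fun s => n + 1 - s)) ∧
    (S.image (fun s => n + 1 - s)).card = S.card ∧
    (S.image (fun s => n + 1 - s)).image (fun s => n + 1 - s) = S := by
  have hlt : ∀ s ∈ S, a ≤ s ∧ s < b := fun s hs => Finset.mem_Ico.mp (hS hs)
  refine ⟨?_, ?_, ?_, ?_⟩
  · intro x hx
    obtain ⟨s, hs, rfl⟩ := Finset.mem_image.mp hx
    have := hlt s hs
    exact Finset.mem_Ico.mpr (by omega)
  · intro x hx hx'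
    obtain ⟨s, hs, rfl⟩ := Finset.mem_image.mp hx
    obtain ⟨s', hs', h⟩ := Finset.mem_image.mp hx'
    have := hlt s hs
    have := hlt s' hs'
    apply hI s' hs'
    rwa [show s' + 1 = s by omega]
  · refine Finset.card_image_of_injOn fun s hs s' hs' h => ?_
    have := hlt s hs
    have := hlt s' hs'
    have h : n + 1 - s = n + 1 - s' := h
    omega
  · rw [Finset.image_image]
    conv_rhs => rw [← Finset.image_id (s := S)]
    refine Finset.image_congr fun s hs => ?_
    have := hlt s hs
    simp only [Function.comp, id]
    omega

lemma chowDual_eq (rk : P → ℕ) (n : ℕ) :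
    chowDualPoly rk n = genPoly rk n (Finset.Ico 1 n) := by
  unfold chowDualPoly genPoly
  rw [show Finset.Icc 2 n = Finset.Ico 2 (n + 1) by ext; simp [Nat.lt_succ_iff]]
  have H1 := fun (S : Finset ℕ) hS hI => refl_image n 2 (n + 1) 1 n S hS le_rfl (by omega) (by omega) hI
  have H2 := fun (S : Finset ℕ) hS hI => refl_image n 1 n 2 (n + 1) S hS (by omega) (by omega) (by omega) hI
  refine Finset.sum_nbij' (fun S => S.image (fun s => n + 1 - s))
    (fun S => S.image (fun s => n + 1 - s)) ?_ ?_ ?_ ?_ ?_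
  · intro S hS
    rw [Finset.mem_filter, Finset.mem_powerset] at hS ⊢
    exact ⟨(H1 S hS.1 hS.2).1, (H1 S hS.1 hS.2).2.1⟩
  · intro S hS
    rw [Finset.mem_filter, Finset.mem_powerset] at hS ⊢
    exact ⟨(H2 S hS.1 hS.2).1, (H2 S hS.1 hS.2).2.1⟩
  · intro S hS
    rw [Finset.mem_filter, Finset.mem_powerset] at hS
    exact (H1 S hS.1 hS.2).2.2.2
  · intro S hS
    rw [Finset.mem_filter, Finset.mem_powerset] at hS
    exact (H2 S hS.1 hS.2).2.2.2
  · intro S hS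
    rw [Finset.mem_filter, Finset.mem_powerset] at hS
    rw [(H1 S hS.1 hS.2).2.2.1, flagHDual]

lemma genPoly_monic (rk : P → ℕ) (N : ℕ) (A : Finset ℕ)
    (hA : ∀ S ⊆ A, IsolatedSet S → 2 * S.card ≤ N) :
    (genPoly rk N A).Monic ∧ (genPoly rk N A).natDegree = N := by
  have hmem : ∅ ∈ A.powerset.filter IsolatedSet := by
    simp [IsolatedSet]
  have h0 : flagH rk ∅ = 1 := by
    simp [flagH, flagF_eq_cnt, cnt_empty]
  have hm1 : (1 + X : ℝ[X]).Monic := by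
    rw [add_comm]; exact Polynomial.monic_X_add_C 1
  have hd1 : (1 + X : ℝ[X]).natDegree = 1 := by
    rw [add_comm]; exact Polynomial.natDegree_X_add_C 1
  have hm : ((1 + X : ℝ[X]) ^ N).Monic := hm1.pow N
  have hd : ((1 + X : ℝ[X]) ^ N).natDegree = N := by rw [hm1.natDegree_pow, hd1, mul_one]
  have hdeg : ((1 + X : ℝ[X]) ^ N).degree = N := by
    rw [Polynomial.degree_eq_natDegree hm.ne_zero, hd]
  set q : ℝ[X] := ∑ S ∈ (A.powerset.filter IsolatedSet).erase ∅,
    (flagH rk S : ℝ) • (X ^ S.card * (1 + X) ^ (N - 2 * S.card)) with hq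
  have hsum : genPoly rk N A = (1 + X) ^ N + q := by
    unfold genPoly
    rw [← Finset.add_sum_erase _ _ hmem, h0, hq]
    simp
  have hqd : q.degree < ((1 + X : ℝ[X]) ^ N).degree := by
    rw [hdeg, hq]
    rw [← Polynomial.mem_degreeLT]
    refine Submodule.sum_mem _ fun S hS => ?_
    rw [Polynomial.mem_degreeLT]
    rw [Finset.mem_erase, Finset.mem_filter, Finset.mem_powerset] at hS
    have hc : 0 < S.card := Finset.card_pos.mpr (Finset.nonempty_iff_ne_empty.mpr hS.1)
    have h2 := hA S hS.2.1 hS.2.2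
    refine lt_of_le_of_lt (Polynomial.degree_smul_le _ _) ?_
    have : (X ^ S.card * (1 + X : ℝ[X]) ^ (N - 2 * S.card)).natDegree = N - S.card := by
      rw [(Polynomial.monic_X_pow _).natDegree_mul (hm1.pow _), Polynomial.natDegree_X_pow,
        hm1.natDegree_pow, hd1]
      omega
    refine lt_of_le_of_lt Polynomial.degree_le_natDegree ?_
    rw [this]
    exact_mod_cast (by omega : N - S.card < N)
  rw [hsum]
  refine ⟨hm.add_of_left hqd, ?_⟩
  rw [Polynomial.natDegree_add_eq_left_of_degree_lt hqd, hd]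

lemma genPoly_aeval {n : ℕ} {rk : P → ℕ} (hrk : IsRankFunction rk) (hsimp : SimplicialOfRank P n)
    (N : ℕ) (A : Finset ℕ) (hA' : A ⊆ Finset.Ico 1 (n + 1))
    (hA : ∀ S ⊆ A, IsolatedSet S → 2 * S.card ≤ N) (z : ℂ) (hz : 1 + z ≠ 0) :
    aeval z (genPoly rk N A) = (1 + z) ^ N * ∑ k ∈ Finset.range (n + 1), ((hvec rk n k : ℝ) : ℂ) *
      ∑ S ∈ A.powerset.filter IsolatedSet, (DD n k S : ℂ) * (z / (1 + z) ^ 2) ^ S.card := by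
  unfold genPoly
  simp only [Finset.mul_sum]
  rw [map_sum, Finset.sum_comm]
  refine Finset.sum_congr rfl fun S hS => ?_
  rw [Finset.mem_filter, Finset.mem_powerset] at hS
  have h2 := hA S hS.1 hS.2
  rw [flagH_eq hrk hsimp S (hS.1.trans hA')]
  have e : (1 + z) ^ N = (1 + z) ^ (N - 2 * S.card) * ((1 + z) ^ 2) ^ S.card := by
    rw [← pow_mul, ← pow_add]; congr 1; omega
  have e2 : (1 + z) ^ N * (z / (1 + z) ^ 2) ^ S.card = z ^ S.card * (1 + z) ^ (N - 2 * S.card) := by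
    rw [e, div_pow]; field_simp
  simp only [map_smul, map_mul, map_pow, map_add, map_one, aeval_X]
  rw [← e2, Complex.real_smul]
  push_cast
  rw [Finset.sum_mul]
  exact Finset.sum_congr rfl fun k _ => by ring

end PosetCount

theorem statement3 {P : Type*} [Fintype P] [PartialOrder P] [OrderBot P]
    (n : ℕ) (rk : P → ℕ)
    (hrk : IsRankFunction rk)
    (hsimp : SimplicialOfRank P n)
    (hpos : ∀ k, 0 ≤ hvec rk n k) :
    Interlaces (chowDualPoly rk n) (chowAugPoly rk n) := by
  rw [chowDual_eq, chowAug_eq]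
  have hA1 : ∀ S ⊆ Finset.Ico 1 n, IsolatedSet S → 2 * S.card ≤ n := by
    intro S hS hI
    cases n with
    | zero =>
      have : S = ∅ := by simpa using hS
      simp [this]
    | succ n => exact isolated_card n S hS hI
  have hA2 : ∀ S ⊆ Finset.Ico 1 (n + 1), IsolatedSet S → 2 * S.card ≤ n + 1 :=
    fun S hS hI => isolated_card n S hS hI
  obtain ⟨m1, d1⟩ := genPoly_monic rk n (Finset.Ico 1 n) hA1
  obtain ⟨m2, d2⟩ := genPoly_monic rk (n + 1) (Finset.Ico 1 (n + 1)) hA2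
  refine interlaces_of_im_pos _ _ m1 m2 (by rw [d1, d2]) fun z hz => ?_
  have hz1 : 1 + z ≠ 0 := by
    intro h; have := congrArg Complex.im h; simp at this; linarith
  rw [genPoly_aeval hrk hsimp n _ (Finset.Ico_subset_Ico_right (by omega)) hA1 z hz1,
    genPoly_aeval hrk hsimp (n + 1) _ (Finset.Subset.refl _) hA2 z hz1]
  have ht := slit_of_im_pos z hz
  set t := z / (1 + z) ^ 2 with htd
  obtain ⟨hF, hG, hR⟩ := main_point t ht (aSeq t) (fun n k => bSeq t n k - aSeq t n k)
    (by simp [aSeq, DD_empty_zero, IsolatedSet, Finset.filter_singleton])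
    (by simp [aSeq, bSeq])
    (fun n k => by
      rw [aSeq_succ]; exact Finset.sum_congr rfl fun j _ => by ring)
    (fun n k hk => by rw [bSeq_succ t n k hk]; ring)
    n (fun k => (hvec rk n k : ℝ)) (fun k => by exact_mod_cast hpos k)
    (by rw [hvec_zero hrk hsimp]; norm_num) _ _ rfl rfl
  simp only [add_sub_cancel] at hG hR
  exact transfer_point n z _ _ hz hF hG hR
end

section
/- Let P be a finite graded simplicial poset of rank n with h-vector (h_0, …, h_n), and let P̂ be P with a top element adjoined. Then for every S ⊆ {1, …, n}, the flag h-vector satisfies β_{P̂}(S) = Σ_{k=0}^{n} h_k · #{ w ∈ S_{n+1} : w(1) = k+1 and Des(w) = {n+1−s : s ∈ S} }, where S_{n+1} is the symmetric group on {1,…,n+1} and Des(w) = { i ∈ {1,…,n} : w(i) > w(i+1) }. -/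
open Polynomial

lemma mobius_pow (S : Finset ℕ) : ∀ b : Finset ℕ → ℤ,
    ∑ T ∈ S.powerset, (-1) ^ ((S \ T).card) * ∑ V ∈ T.powerset, b V = b S := by
  induction S using Finset.induction_on with
  | empty => intro b; simp
  | insert a S ha ih =>
    intro b
    rw [Finset.sum_powerset_insert ha]
    have h1 : ∀ T ∈ S.powerset, (-1 : ℤ) ^ ((insert a S \ T).card) * ∑ V ∈ T.powerset, b V
        = - ((-1) ^ ((S \ T).card) * ∑ V ∈ T.powerset, b V) := by
      intro T hT
      have haT : a ∉ T := fun h => ha (Finset.mem_powerset.1 hT h)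
      rw [Finset.insert_sdiff_of_notMem _ haT, Finset.card_insert_of_notMem (by simp [ha]), pow_succ]
      ring
    have h2 : ∀ T ∈ S.powerset,
        (-1 : ℤ) ^ ((insert a S \ insert a T).card) * ∑ V ∈ (insert a T).powerset, b V
        = (-1) ^ ((S \ T).card) * ∑ V ∈ T.powerset, b V
          + (-1) ^ ((S \ T).card) * ∑ V ∈ T.powerset, b (insert a V) := by
      intro T hT
      have haT : a ∉ T := fun h => ha (Finset.mem_powerset.1 hT h)
      have : insert a S \ insert a T = S \ T := by
        ext x; simp only [Finset.mem_sdiff, Finset.mem_insert]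
        constructor
        · rintro ⟨h | h, h'⟩ <;> tauto
        · rintro ⟨h, h'⟩
          refine ⟨Or.inr h, ?_⟩
          rintro (rfl | h2)
          · exact ha h
          · exact h' h2
      rw [this, Finset.sum_powerset_insert haT]
      ring
    rw [Finset.sum_congr rfl h1, Finset.sum_congr rfl h2, Finset.sum_add_distrib,
      Finset.sum_neg_distrib, ih (fun V => b (insert a V))]
    ring

/-- the transform `p ↦ Σ p_k (1+X)^(n-k)` -/
noncomputable def trL (n : ℕ) (p : ℤ[X]) : ℤ[X] :=
  ∑ k ∈ Finset.range (n + 1), C (p.coeff k) * (X + 1) ^ (n - k)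

lemma trL_sub (n : ℕ) (p q : ℤ[X]) : trL n (p - q) = trL n p - trL n q := by
  simp [trL, sub_mul, Finset.sum_sub_distrib]

lemma trL_X_mul (n : ℕ) (p : ℤ[X]) : trL (n + 1) (X * p) = trL n p := by
  unfold trL
  rw [Finset.sum_range_succ']
  simp [Polynomial.coeff_X_mul]

lemma trL_succ (n : ℕ) (p : ℤ[X]) (hp : p.natDegree ≤ n) :
    trL (n + 1) p = (X + 1) * trL n p := by
  unfold trL
  rw [Finset.sum_range_succ, Polynomial.coeff_eq_zero_of_natDegree_lt (by omega), Finset.mul_sum]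
  simp only [map_zero, zero_mul, add_zero]
  refine Finset.sum_congr rfl fun k hk => ?_
  have : n + 1 - k = (n - k) + 1 := by have := Finset.mem_range.1 hk; omega
  rw [this, pow_succ]; ring

lemma deg_aux (i m : ℕ) : (X ^ i * (1 - X) ^ m : ℤ[X]).natDegree ≤ i + m := by
  have h1 : (1 - X : ℤ[X]).natDegree ≤ 1 := by
    compute_degree
  calc _ ≤ (X ^ i : ℤ[X]).natDegree + ((1 - X) ^ m : ℤ[X]).natDegree := natDegree_mul_le
    _ ≤ i + m := by
      have := natDegree_pow_le_of_le m h1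
      have := natDegree_X_pow_le (R := ℤ) i
      omega

lemma trL_basic (i m : ℕ) : trL (i + m) (X ^ i * (1 - X) ^ m) = X ^ m := by
  induction m with
  | zero =>
    induction i with
    | zero => simp [trL]
    | succ i ih =>
      rw [pow_succ, mul_comm (X ^ i), mul_assoc, show i + 1 + 0 = (i + 0) + 1 by ring, trL_X_mul]
      exact ih
  | succ m ih =>
    have : (X ^ i * (1 - X) ^ (m + 1) : ℤ[X]) =
      X ^ i * (1 - X) ^ m - X * (X ^ i * (1 - X) ^ m) := by ring
    rw [this, ← add_assoc, trL_sub, trL_X_mul, trL_succ _ _ (deg_aux i m), ih]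
    ring

lemma trL_sum (n : ℕ) (f : ℕ → ℤ) (s : Finset ℕ) (q : ℕ → ℤ[X]) :
    trL n (∑ i ∈ s, C (f i) * q i) = ∑ i ∈ s, C (f i) * trL n (q i) := by
  unfold trL
  simp only [finsetSum_coeff, coeff_C_mul, map_sum, map_mul, Finset.sum_mul, Finset.mul_sum]
  rw [Finset.sum_comm]
  simp only [mul_assoc]

lemma f_from_h (n t : ℕ) (ht : t ≤ n) (f : ℕ → ℤ) :
    f t = ∑ k ∈ Finset.range (n + 1),
      (∑ i ∈ Finset.range (n + 1), C (f i) * X ^ i * (1 - X) ^ (n - i)).coeff k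
        * ((n - k).choose (n - t) : ℤ) := by
  have h := trL_sum n f (Finset.range (n + 1)) (fun i => X ^ i * (1 - X) ^ (n - i))
  have h2 : ∀ i ∈ Finset.range (n + 1), C (f i) * trL n (X ^ i * (1 - X) ^ (n - i))
      = C (f i) * X ^ (n - i) := by
    intro i hi
    have hi := Finset.mem_range.1 hi
    have := trL_basic i (n - i)
    rw [show i + (n - i) = n by omega] at this
    rw [this]
  rw [Finset.sum_congr rfl h2] at h
  have h3 := congrArg (fun p => p.coeff (n - t)) h
  simp only [trL, finsetSum_coeff, coeff_C_mul, coeff_X_add_one_pow, coeff_X_pow] at h3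
  have h4 : ∑ x ∈ Finset.range (n + 1), f x * (if n - t = n - x then (1 : ℤ) else 0) = f t := by
    rw [Finset.sum_eq_single t]
    · simp
    · intro b hb hbt
      have := Finset.mem_range.1 hb
      rw [if_neg (by omega)]; simp
    · intro h; exact absurd (Finset.mem_range.2 (by omega)) h
  rw [h4] at h3
  rw [← h3]
  simp only [finsetSum_coeff, mul_assoc, coeff_C_mul]

/-- every lower interval is boolean, of rank given by `rk`. -/
def LocBool {Q : Type*} [PartialOrder Q] (rk : Q → ℕ) : Prop :=
  ∀ x : Q, ∃ e : Finset (Fin (rk x)) → Q, (∀ A B, e A ≤ e B ↔ A ≤ B) ∧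
    (∀ y, y ≤ x ↔ ∃ A, e A = y) ∧ ∀ A, rk (e A) = A.card

lemma locBool_finset (N : ℕ) : LocBool (fun A : Finset (Fin N) => A.card) := by
  intro x
  refine ⟨fun B => B.map (x.orderEmbOfFin rfl).toEmbedding, ?_, ?_, ?_⟩
  · intro A B
    exact Finset.map_subset_map
  · intro y
    constructor
    · intro h
      have : y ⊆ (Finset.univ : Finset (Fin x.card)).map (x.orderEmbOfFin rfl).toEmbedding := by
        rw [Finset.map_orderEmbOfFin_univ]; exact h
      obtain ⟨u, -, hu⟩ := Finset.subset_map_iff.1 this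
      exact ⟨u, hu.symm⟩
    · rintro ⟨A, rfl⟩
      intro z hz
      obtain ⟨i, -, rfl⟩ := Finset.mem_map.1 hz
      exact Finset.orderEmbOfFin_mem x rfl i
  · intro A; simp

lemma locBool_poset {P : Type*} [Fintype P] [PartialOrder P] [OrderBot P]
    (n : ℕ) (rk : P → ℕ) (hrk : IsRankFunction rk) (hsimp : SimplicialOfRank P n) :
    LocBool rk := by
  intro x
  obtain ⟨m, hxm, hm⟩ : ∃ m, x ≤ m ∧ IsMax m := by
    obtain ⟨m, hm, h2⟩ := Set.Finite.exists_le_maximal (Set.toFinite (Set.univ : Set P)) (Set.mem_univ x)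
    exact ⟨m, hm, fun b hb => h2.2 trivial hb⟩
  obtain ⟨e⟩ := hsimp m hm
  have hcard : ∀ A : Finset (Fin n), rk (e.symm A : P) = A.card := by
    intro A
    induction A using Finset.induction_on with
    | empty =>
      have : ((e.symm ∅ : Set.Icc (⊥ : P) m) : P) = ⊥ := by
        have h : e.symm ∅ ≤ ⟨⊥, le_refl _, bot_le⟩ := by
          rw [e.symm_apply_le]; exact Finset.empty_subset _
        exact le_bot_iff.1 h
      rw [this, hrk.1]; simp
    | insert a A ha ih =>
      rw [Finset.card_insert_of_notMem ha, ← ih]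
      apply hrk.2
      have h1 : A ⋖ insert a A := Finset.covBy_insert ha
      have h2 : e.symm A ⋖ e.symm (insert a A) := (apply_covBy_apply_iff e.symm).2 h1
      refine ⟨h2.lt, fun c hc hc' => ?_⟩
      exact h2.2 (c := ⟨c, bot_le, hc'.le.trans (e.symm (insert a A)).2.2⟩) hc hc'
  set X := e ⟨x, bot_le, hxm⟩ with hX
  have hx : (e.symm X : P) = x := by rw [hX]; simp
  have hXc : X.card = rk x := by rw [← hcard, hx]
  have key : ∃ g : Finset (Fin (rk x)) → Finset (Fin n), (∀ A B, g A ≤ g B ↔ A ≤ B) ∧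
    (∀ y, y ≤ X ↔ ∃ A, g A = y) ∧ ∀ A, (g A).card = A.card := by
    rw [← hXc]; exact locBool_finset n X
  obtain ⟨g, g1, g2, g3⟩ := key
  refine ⟨fun A => (e.symm (g A) : P), ?_, ?_, ?_⟩
  · intro A B
    rw [Subtype.coe_le_coe, e.symm.le_iff_le, g1]
  · intro y
    constructor
    · intro hy
      have : e ⟨y, bot_le, hy.trans hxm⟩ ≤ X := by
        rw [hX, e.le_iff_le]; exact hy
      obtain ⟨A, hA⟩ := (g2 _).1 this
      exact ⟨A, by simp only [hA]; simp⟩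
    · rintro ⟨A, rfl⟩
      have : g A ≤ X := (g2 _).2 ⟨A, rfl⟩
      have h2 : e.symm (g A) ≤ e.symm X := e.symm.le_iff_le.2 this
      exact (Subtype.coe_le_coe.2 h2).trans hx.le
  · intro A; rw [hcard, g3]

lemma LocBool.strict {Q : Type*} [PartialOrder Q] {rk : Q → ℕ} (h : LocBool rk) {x y : Q}
    (hxy : y < x) : rk y < rk x := by
  obtain ⟨e, e1, e2, e3⟩ := h x
  obtain ⟨A, rfl⟩ := (e2 y).1 hxy.le
  obtain ⟨B, hB⟩ := (e2 x).1 le_rfl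
  rw [e3]
  have : A ≠ Finset.univ := by
    rintro rfl
    apply hxy.not_ge
    have := (e1 B Finset.univ).2 (Finset.subset_univ _)
    rwa [hB] at this
  have h3 := Finset.card_lt_card (Finset.ssubset_univ_iff.2 this)
  simpa using h3

/-- the number of chains in the boolean lattice of rank `t` with rank set `U`. -/
noncomputable def boolCh (t : ℕ) (U : Finset ℕ) : ℕ :=
  Nat.card {d : Finset (Finset (Fin t)) // IsChain (· ≤ ·) (d : Set (Finset (Fin t))) ∧
    d.image Finset.card = U}

lemma card_chain_through {Q : Type*} [Fintype Q] [PartialOrder Q] {rk : Q → ℕ} (h : LocBool rk)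
    (T : Finset ℕ) (x : Q) (hxT : rk x ∈ T) (hT : ∀ s ∈ T, s ≤ rk x) :
    Nat.card {c : Finset Q // IsChain (· ≤ ·) (c : Set Q) ∧ c.image rk = T ∧ x ∈ c}
      = boolCh (rk x) (T.erase (rk x)) := by
  classical
  obtain ⟨e, e1, e2, e3⟩ := h x
  have einj : Function.Injective e := fun A B hAB =>
    le_antisymm ((e1 A B).1 hAB.le) ((e1 B A).1 hAB.ge)
  have himg : ∀ d : Finset (Finset (Fin (rk x))), (d.image e).image rk = d.image Finset.card := by
    intro d
    rw [Finset.image_image]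
    exact Finset.image_congr (fun A _ => e3 A)
  have hxd : ∀ d : Finset (Finset (Fin (rk x))), d.image Finset.card = T.erase (rk x) →
      x ∉ d.image e := by
    intro d hd hx
    have := Finset.mem_image_of_mem rk hx
    rw [himg, hd] at this
    simp at this
  symm
  unfold boolCh
  refine Nat.card_congr (Equiv.ofBijective (fun d => ⟨insert x (d.1.image e), ?_, ?_, ?_⟩) ⟨?_, ?_⟩)
  · rw [Finset.coe_insert]
    apply IsChain.insert
    · rintro a ha b hb hab
      obtain ⟨A, hA, rfl⟩ := Finset.mem_image.1 ha
      obtain ⟨B, hB, rfl⟩ := Finset.mem_image.1 hb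
      show e A ≤ e B ∨ e B ≤ e A
      rw [e1, e1]
      exact d.2.1 hA hB (fun h => hab (by rw [h]))
    · intro b hb _
      obtain ⟨B, hB, rfl⟩ := Finset.mem_image.1 hb
      exact Or.inr ((e2 _).2 ⟨B, rfl⟩)
  · rw [Finset.image_insert, himg, d.2.2, Finset.insert_erase hxT]
  · exact Finset.mem_insert_self _ _
  · rintro ⟨d, hd1, hd2⟩ ⟨d', hd1', hd2'⟩ heq
    have heq := congrArg Subtype.val heq
    simp only at heq
    have := congrArg (fun c => c.erase x) heq
    simp only [Finset.erase_insert (hxd d hd2), Finset.erase_insert (hxd d' hd2')] at this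
    exact Subtype.ext (Finset.image_injective einj this)
  · rintro ⟨c, hc1, hc2, hc3⟩
    have hle : ∀ y ∈ c, y ≤ x := by
      intro y hy
      by_contra hn
      have hne : y ≠ x := fun h => hn h.le
      rcases hc1 hy hc3 hne with h1 | h1
      · exact hn h1
      · have := h.strict (lt_of_le_of_ne h1 hne.symm)
        have := hT (rk y) (hc2 ▸ Finset.mem_image_of_mem rk hy)
        omega
    set d : Finset (Finset (Fin (rk x))) := Finset.univ.filter (fun A => e A ∈ c.erase x) with hd
    have hdi : d.image e = c.erase x := by
      ext y
      rw [Finset.mem_image]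
      constructor
      · rintro ⟨A, hA, rfl⟩
        exact (Finset.mem_filter.1 hA).2
      · intro hy
        obtain ⟨A, rfl⟩ := (e2 y).1 (hle y (Finset.mem_of_mem_erase hy))
        exact ⟨A, Finset.mem_filter.2 ⟨Finset.mem_univ _, hy⟩, rfl⟩
    refine ⟨⟨d, ?_, ?_⟩, ?_⟩
    · intro A hA B hB hAB
      have hA := Finset.mem_of_mem_erase (Finset.mem_filter.1 hA).2
      have hB := Finset.mem_of_mem_erase (Finset.mem_filter.1 hB).2
      have := hc1 hA hB (fun h => hAB (einj h))
      simpa only [e1] using this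
    · rw [← himg, hdi]
      ext s
      simp only [Finset.mem_image, Finset.mem_erase, ← hc2]
      constructor
      · rintro ⟨y, ⟨hyx, hy⟩, rfl⟩
        exact ⟨(h.strict (lt_of_le_of_ne (hle y hy) hyx)).ne, y, hy, rfl⟩
      · rintro ⟨hs, y, hy, rfl⟩
        exact ⟨y, ⟨fun h => hs (by rw [h]), hy⟩, rfl⟩
    · apply Subtype.ext
      simp only [hdi, Finset.insert_erase hc3]

lemma card_chain {Q : Type*} [Fintype Q] [PartialOrder Q] {rk : Q → ℕ} (h : LocBool rk)
    (T : Finset ℕ) (t : ℕ) (htT : t ∈ T) (hT : ∀ s ∈ T, s ≤ t) (p : Q → Prop) :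
    Nat.card {c : Finset Q // IsChain (· ≤ ·) (c : Set Q) ∧ c.image rk = T ∧
        ∃ x ∈ c, rk x = t ∧ p x}
      = Nat.card {x : Q // rk x = t ∧ p x} * boolCh t (T.erase t) := by
  classical
  have E : (Σ x : {x : Q // rk x = t ∧ p x},
      {c : Finset Q // IsChain (· ≤ ·) (c : Set Q) ∧ c.image rk = T ∧ x.1 ∈ c}) ≃
      {c : Finset Q // IsChain (· ≤ ·) (c : Set Q) ∧ c.image rk = T ∧
        ∃ x ∈ c, rk x = t ∧ p x} := by
    refine Equiv.ofBijective
      (fun z => ⟨z.2.1, z.2.2.1, z.2.2.2.1, z.1.1, z.2.2.2.2, z.1.2⟩) ⟨?_, ?_⟩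
    · rintro ⟨⟨x, hx, hp⟩, c, hc1, hc2, hc3⟩ ⟨⟨x', hx', hp'⟩, c', hc1', hc2', hc3'⟩ heq
      have heq : c = c' := congrArg Subtype.val heq
      subst heq
      have : x = x' := by
        by_contra hne
        rcases hc1 hc3 hc3' hne with h1 | h1 <;> dsimp only at h1
        · have := h.strict (lt_of_le_of_ne h1 hne); omega
        · have := h.strict (lt_of_le_of_ne h1 (Ne.symm hne)); omega
      subst this
      rfl
    · rintro ⟨c, hc1, hc2, x, hx, hp⟩
      exact ⟨⟨⟨x, hp⟩, c, hc1, hc2, hx⟩, rfl⟩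
  rw [← Nat.card_congr E, Nat.card_sigma]
  rw [Finset.sum_congr rfl (g := fun _ => boolCh t (T.erase t))]
  · rw [Finset.sum_const, smul_eq_mul, Finset.card_univ, Nat.card_eq_fintype_card]
  · rintro ⟨x, rfl, hp⟩ -
    exact card_chain_through h T x htT hT

lemma flagF_eq_s4 {P : Type*} [Fintype P] [PartialOrder P] [OrderBot P]
    (rk : P → ℕ) (h0 : rk ⊥ = 0) (h : LocBool rk) (T : Finset ℕ) (hT : 0 ∉ T) :
    flagF rk T = Nat.card {c : Finset P // IsChain (· ≤ ·) (c : Set P) ∧ c.image rk = insert 0 T} := by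
  classical
  unfold flagF
  refine Nat.card_congr (Equiv.ofBijective (fun d => ⟨insert ⊥ d.1, ?_, ?_⟩) ⟨?_, ?_⟩)
  · rw [Finset.coe_insert]
    exact d.2.1.insert (fun b _ _ => Or.inl bot_le)
  · rw [Finset.image_insert, d.2.2.2, h0]
  · rintro ⟨d, hd1, hd2, hd3⟩ ⟨d', hd1', hd2', hd3'⟩ heq
    have heq := congrArg Subtype.val heq
    simp only at heq
    have := congrArg (fun c => c.erase ⊥) heq
    simp only [Finset.erase_insert hd2, Finset.erase_insert hd2'] at this
    exact Subtype.ext this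
  · rintro ⟨c, hc1, hc2⟩
    have hz : ∀ y, rk y = 0 ↔ y = ⊥ := by
      intro y
      constructor
      · intro hy
        by_contra hne
        have := h.strict (bot_lt_iff_ne_bot.2 hne)
        omega
      · rintro rfl; exact h0
    have hb : ⊥ ∈ c := by
      have : 0 ∈ c.image rk := by rw [hc2]; exact Finset.mem_insert_self _ _
      obtain ⟨y, hy, hy0⟩ := Finset.mem_image.1 this
      rwa [(hz y).1 hy0] at hy
    refine ⟨⟨c.erase ⊥, ?_, ?_, ?_⟩, ?_⟩
    · exact hc1.mono (by simp)
    · simp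
    · ext s
      have hs : s ∈ c.image rk ↔ s ∈ insert 0 T := by rw [hc2]
      simp only [Finset.mem_image, Finset.mem_erase, Finset.mem_insert] at hs ⊢
      constructor
      · rintro ⟨y, ⟨hyb, hy⟩, rfl⟩
        exact (hs.1 ⟨y, hy, rfl⟩).resolve_left (fun h => hyb ((hz y).1 h))
      · intro hsT
        obtain ⟨y, hy, rfl⟩ := hs.2 (Or.inr hsT)
        exact ⟨y, ⟨fun h => hT (by rwa [h, h0] at hsT), hy⟩, rfl⟩
    · apply Subtype.ext
      simp only [Finset.insert_erase hb]

/-- the last `s` positions -/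
def seg (n s : ℕ) : Finset (Fin (n + 1)) := Finset.univ.filter (fun i => n + 1 ≤ i.val + s)

lemma mem_seg {n s : ℕ} {i : Fin (n + 1)} : i ∈ seg n s ↔ n + 1 ≤ i.val + s := by
  simp [seg]

lemma card_seg {n s : ℕ} (hs : s ≤ n) : (seg n s).card = s := by
  rcases Nat.eq_zero_or_pos s with rfl | h0
  · rw [Finset.card_eq_zero]
    ext i; simp [mem_seg]; omega
  have : seg n s = Finset.Ici (⟨n + 1 - s, by omega⟩ : Fin (n + 1)) := by
    ext i
    simp only [mem_seg, Finset.mem_Ici, Fin.le_def]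
    omega
  rw [this, Fin.card_Ici]
  simp only
  omega

lemma upper_seg {n : ℕ} (U : Finset (Fin (n + 1))) (hU : ∀ i j, i ≤ j → i ∈ U → j ∈ U)
    (hc : U.card ≤ n) : U = seg n U.card := by
  have h1 : IsUpperSet (U : Set (Fin (n + 1))) := fun i j h hi => hU i j h hi
  have h2 : IsUpperSet (seg n U.card : Set (Fin (n + 1))) := by
    intro i j h hi
    have hi := mem_seg.1 (Finset.mem_coe.1 hi)
    have h := Fin.le_def.1 h
    exact Finset.mem_coe.2 (mem_seg.2 (by omega))
  have h3 := card_seg hc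
  rcases h1.total h2 with h | h
  · exact Finset.eq_of_subset_of_card_le (Finset.coe_subset.1 h) h3.le
  · exact (Finset.eq_of_subset_of_card_le (Finset.coe_subset.1 h) h3.ge).symm

lemma no_des_lt {n : ℕ} (w : Equiv.Perm (Fin (n + 1))) (T : Finset ℕ) (hT : ∀ s ∈ T, s ≤ n)
    (hw : desSet w ⊆ T.image (fun s => n + 1 - s)) (i j : Fin (n + 1)) (hij : i < j)
    (hs : ∀ s ∈ T, j ∈ seg n s → i ∈ seg n s) : w i < w j := by
  have key : ∀ d : ℕ, ∀ hd : i.val + 1 + d ≤ j.val, w i < w ⟨i.val + 1 + d, by omega⟩ := by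
    have step : ∀ l (hl : l + 1 ≤ j.val), i.val ≤ l →
        w ⟨l, by omega⟩ < w ⟨l + 1, by omega⟩ := by
      intro l hl hil
      by_contra hn
      have hne : w ⟨l + 1, by omega⟩ ≠ w ⟨l, by omega⟩ := by
        intro h
        have := congrArg Fin.val (w.injective h)
        simp at this
      have hlt := lt_of_le_of_ne (not_lt.1 hn) hne
      have hmem : l + 1 ∈ desSet w := by
        refine Finset.mem_image.2 ⟨⟨l, by omega⟩, Finset.mem_filter.2 ⟨Finset.mem_univ _, ?_⟩, rfl⟩
        exact hlt
      obtain ⟨s, hsT, hsl⟩ := Finset.mem_image.1 (hw hmem)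
      have := hT s hsT
      have h1 : j ∈ seg n s := mem_seg.2 (by omega)
      have h2 := mem_seg.1 (hs s hsT h1)
      omega
    intro d
    induction d with
    | zero => intro hd; exact step i.val (by omega) le_rfl
    | succ d ih =>
      intro hd
      exact (ih (by omega)).trans (step (i.val + 1 + d) (by omega) (by omega))
  have hij' := Fin.lt_def.1 hij
  have := key (j.val - i.val - 1) (by omega)
  have e : (⟨i.val + 1 + (j.val - i.val - 1), by omega⟩ : Fin (n + 1)) = j :=
    Fin.ext (by simp only; omega)
  rwa [e] at this

/-- number of members of `c` containing `x` -/
def lev {n : ℕ} (c : Finset (Finset (Fin (n + 1)))) (x : Fin (n + 1)) : ℕ :=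
  (c.filter (fun A => x ∈ A)).card

lemma lev_upper {n : ℕ} (c : Finset (Finset (Fin (n + 1))))
    (hc : IsChain (· ≤ ·) (c : Set (Finset (Fin (n + 1))))) (A : Finset (Fin (n + 1)))
    (hA : A ∈ c) (x y : Fin (n + 1)) (hx : x ∈ A) (hxy : lev c x ≤ lev c y) : y ∈ A := by
  by_contra hy
  have : c.filter (fun A => y ∈ A) ⊂ c.filter (fun A => x ∈ A) := by
    rw [Finset.ssubset_iff_of_subset]
    · exact ⟨A, by simp [hA, hx], by simp [hy]⟩
    · intro B hB
      obtain ⟨hB, hyB⟩ := Finset.mem_filter.1 hB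
      refine Finset.mem_filter.2 ⟨hB, ?_⟩
      have hne : A ≠ B := fun h => hy (h ▸ hyB)
      rcases hc hA hB hne with h | h
      · exact h hx
      · exact absurd (h hyB) hy
  have := Finset.card_lt_card this
  unfold lev at hxy
  omega

lemma sort_map {n : ℕ} (c : Finset (Finset (Fin (n + 1))))
    (hc : IsChain (· ≤ ·) (c : Set (Finset (Fin (n + 1))))) (A : Finset (Fin (n + 1)))
    (hA : A ∈ c) (hAn : A.card ≤ n) :
    (seg n A.card).map (Tuple.sort (lev c)).toEmbedding = A := by
  set w := Tuple.sort (lev c) with hw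
  have hm := (Tuple.eq_sort_iff.1 hw).1
  have h1 : A.map w.symm.toEmbedding = seg n A.card := by
    have := upper_seg (A.map w.symm.toEmbedding) (by
      intro i j hij hi
      simp only [Finset.mem_map_equiv, Equiv.symm_symm] at hi ⊢
      exact lev_upper c hc A hA _ _ hi (hm hij)) (by simpa using hAn)
    simpa using this
  rw [← h1]
  ext x
  simp

lemma eq_sort_lev {n : ℕ} (w : Equiv.Perm (Fin (n + 1))) (T : Finset ℕ) (hT : ∀ s ∈ T, s ≤ n)
    (hw : desSet w ⊆ T.image (fun s => n + 1 - s)) :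
    w = Tuple.sort (lev (T.image (fun s => (seg n s).map w.toEmbedding))) := by
  set c := T.image (fun s => (seg n s).map w.toEmbedding) with hc
  have hsub : ∀ i j : Fin (n + 1), i ≤ j →
      c.filter (fun A => w i ∈ A) ⊆ c.filter (fun A => w j ∈ A) := by
    intro i j hij A hA
    obtain ⟨hA, hiA⟩ := Finset.mem_filter.1 hA
    refine Finset.mem_filter.2 ⟨hA, ?_⟩
    obtain ⟨s, hs, rfl⟩ := Finset.mem_image.1 hA
    simp only [Finset.mem_map_equiv, Equiv.symm_apply_apply, mem_seg] at hiA ⊢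
    have := Fin.le_def.1 hij
    omega
  rw [Tuple.eq_sort_iff]
  refine ⟨fun i j hij => Finset.card_le_card (hsub i j hij), ?_⟩
  intro i j hij heq
  apply no_des_lt w T hT hw i j hij
  have hfe := Finset.eq_of_subset_of_card_le (hsub i j hij.le) heq.ge
  intro s hs hjs
  have : (seg n s).map w.toEmbedding ∈ c.filter (fun A => w i ∈ A) := by
    rw [hfe]
    exact Finset.mem_filter.2 ⟨Finset.mem_image_of_mem _ hs, by simpa using hjs⟩
  simpa using (Finset.mem_filter.1 this).2

/-- `k` is the least element of the complement of `A` -/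
def firstMiss {n : ℕ} (k : ℕ) (A : Finset (Fin (n + 1))) : Prop :=
  ∃ κ : Fin (n + 1), κ.val = k ∧ κ ∉ A ∧ ∀ j < κ, j ∈ A

lemma first_iff {n : ℕ} (w : Equiv.Perm (Fin (n + 1))) (T : Finset ℕ) (hT : ∀ s ∈ T, s ≤ n)
    (hw : desSet w ⊆ T.image (fun s => n + 1 - s)) (t : ℕ) (htT : t ∈ T)
    (hTt : ∀ s ∈ T, s ≤ t) (k : ℕ) :
    (w 0 : ℕ) = k ↔ firstMiss k ((seg n t).map w.toEmbedding) := by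
  have h0 : w 0 ∉ (seg n t).map w.toEmbedding := by
    have := hT t htT
    simp [mem_seg]
    omega
  have h1 : ∀ j < w 0, j ∈ (seg n t).map w.toEmbedding := by
    intro j hj
    by_contra hn
    obtain ⟨i, rfl⟩ := w.surjective j
    have hi : i ∉ seg n t := by simpa using hn
    have hi0 : 0 < i := by
      rw [Fin.pos_iff_ne_zero]; rintro rfl; exact lt_irrefl _ hj
    have := no_des_lt w T hT hw 0 i hi0 (by
      intro s hs his
      rw [mem_seg] at his hi
      have := hTt s hs
      omega)
    exact lt_asymm this hj
  constructor
  · intro h; exact ⟨w 0, h, h0, h1⟩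
  · rintro ⟨κ, rfl, hκ, hκ2⟩
    rcases lt_trichotomy (w 0) κ with h | h | h
    · exact absurd (hκ2 _ h) h0
    · rw [h]
    · exact absurd (h1 _ h) hκ

lemma card_perm_eq {n : ℕ} (T : Finset ℕ) (hT : ∀ s ∈ T, s ≤ n) (t : ℕ) (htT : t ∈ T)
    (hTt : ∀ s ∈ T, s ≤ t) (k : ℕ) :
    Nat.card {w : Equiv.Perm (Fin (n + 1)) //
        (w 0 : ℕ) = k ∧ desSet w ⊆ T.image (fun s => n + 1 - s)} =
    Nat.card {c : Finset (Finset (Fin (n + 1))) //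
        IsChain (· ≤ ·) (c : Set (Finset (Fin (n + 1)))) ∧
        c.image (fun A : Finset (Fin (n + 1)) => A.card) = T ∧
        ∃ x ∈ c, (fun A : Finset (Fin (n + 1)) => A.card) x = t ∧ firstMiss k x} := by
  have hcs : ∀ (w : Equiv.Perm (Fin (n + 1))), ∀ s ∈ T,
      ((seg n s).map w.toEmbedding).card = s := by
    intro w s hs; rw [Finset.card_map, card_seg (hT s hs)]
  refine Nat.card_congr (Equiv.ofBijective
    (fun w => ⟨T.image (fun s => (seg n s).map w.1.toEmbedding), ?_, ?_, ?_⟩) ⟨?_, ?_⟩)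
  · intro A hA B hB _
    obtain ⟨s, hs, rfl⟩ := Finset.mem_image.1 hA
    obtain ⟨s', hs', rfl⟩ := Finset.mem_image.1 hB
    show Finset.map _ _ ⊆ Finset.map _ _ ∨ Finset.map _ _ ⊆ Finset.map _ _
    rw [Finset.map_subset_map, Finset.map_subset_map]
    rcases le_total s s' with h | h
    · left; intro i hi; rw [mem_seg] at hi ⊢; omega
    · right; intro i hi; rw [mem_seg] at hi ⊢; omega
  · rw [Finset.image_image]
    conv_rhs => rw [← Finset.image_id (s := T)]
    exact Finset.image_congr (fun s hs => hcs w.1 s hs)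
  · exact ⟨_, Finset.mem_image_of_mem _ htT, hcs w.1 t htT,
      (first_iff w.1 T hT w.2.2 t htT hTt k).1 w.2.1⟩
  · rintro ⟨w, hw1, hw2⟩ ⟨w', hw1', hw2'⟩ heq
    have heq := congrArg Subtype.val heq
    simp only at heq
    apply Subtype.ext
    simp only
    rw [eq_sort_lev w T hT hw2, eq_sort_lev w' T hT hw2', heq]
  · rintro ⟨c, hc1, hc2, x, hx, hxt, hxk⟩
    have hcn : ∀ A ∈ c, A.card ≤ n := fun A hA =>
      hT _ (hc2 ▸ Finset.mem_image_of_mem (fun A : Finset (Fin (n + 1)) => A.card) hA)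
    have hmap := fun A hA => sort_map c hc1 A hA (hcn A hA)
    have hsort := (Tuple.eq_sort_iff.1 (rfl : Tuple.sort (lev c) = Tuple.sort (lev c))).2
    set w := Tuple.sort (lev c) with hw
    have hdes : desSet w ⊆ T.image (fun s => n + 1 - s) := by
      intro d hd
      obtain ⟨i, hi, rfl⟩ := Finset.mem_image.1 hd
      have hi := (Finset.mem_filter.1 hi).2
      by_contra hn
      apply lt_asymm hi
      apply hsort _ _ i.castSucc_lt_succ
      unfold lev
      congr 1
      apply Finset.filter_congr
      intro A hA
      have hsT : A.card ∈ T := hc2 ▸ Finset.mem_image_of_mem (fun A : Finset (Fin (n + 1)) => A.card) hA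
      have hne : n + 1 - A.card ≠ i.val + 1 := fun h => hn (Finset.mem_image.2 ⟨_, hsT, h⟩)
      have h2 := hcn A hA
      have h3 := hmap A hA
      have h4 : ∀ j, w j ∈ A ↔ j ∈ seg n A.card := by
        intro j
        conv_lhs => rw [← h3]
        simp
      rw [h4, h4, mem_seg, mem_seg]
      simp only [Fin.val_castSucc, Fin.val_succ]
      omega
    refine ⟨⟨w, ?_, hdes⟩, ?_⟩
    · rw [first_iff w T hT hdes t htT hTt k, ← hxt, hmap x hx]
      exact hxk
    · apply Subtype.ext
      simp only
      rw [← hc2, Finset.image_image]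
      conv_rhs => rw [← Finset.image_id (s := c)]
      exact Finset.image_congr (fun A hA => hmap A hA)

lemma card_firstMiss {n : ℕ} (k t : ℕ) (hk : k ≤ n) (ht : t ≤ n) :
    Nat.card {A : Finset (Fin (n + 1)) // A.card = t ∧ firstMiss k A} = (n - k).choose (n - t) := by
  classical
  set κ : Fin (n + 1) := ⟨k, by omega⟩ with hκ
  have hI : (Finset.Ioi κ).card = n - k := by rw [Fin.card_Ioi]; simp [hκ]
  rw [← hI, ← Finset.card_powersetCard, ← Nat.card_eq_finsetCard, eq_comm]
  refine Nat.card_congr (Equiv.ofBijective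
    (fun B => ⟨(insert κ B.1)ᶜ, ?_, κ, rfl, ?_, ?_⟩) ⟨?_, ?_⟩)
  · obtain ⟨hB1, hB2⟩ := Finset.mem_powersetCard.1 B.2
    have hκB : κ ∉ B.1 := fun h => by simpa using hB1 h
    rw [Finset.card_compl, Finset.card_insert_of_notMem hκB, hB2, Fintype.card_fin]
    omega
  · simp
  · intro j hj
    obtain ⟨hB1, hB2⟩ := Finset.mem_powersetCard.1 B.2
    rw [Finset.mem_compl, Finset.mem_insert]
    rintro (rfl | h)
    · exact lt_irrefl _ hj
    · exact lt_asymm hj (Finset.mem_Ioi.1 (hB1 h))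
  · rintro ⟨B, hB⟩ ⟨B', hB'⟩ heq
    have hκB : κ ∉ B := fun h => by simpa using (Finset.mem_powersetCard.1 hB).1 h
    have hκB' : κ ∉ B' := fun h => by simpa using (Finset.mem_powersetCard.1 hB').1 h
    have heq := compl_injective (congrArg Subtype.val heq)
    have := congrArg (fun c => c.erase κ) heq
    simp only [Finset.erase_insert hκB, Finset.erase_insert hκB'] at this
    exact Subtype.ext this
  · rintro ⟨A, hA, κ', hk', h1, h2⟩
    have : κ' = κ := Fin.ext hk'
    subst this
    have hmem : κ ∈ Aᶜ := by simpa using h1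
    refine ⟨⟨Aᶜ.erase κ, Finset.mem_powersetCard.2 ⟨?_, ?_⟩⟩, ?_⟩
    · intro j hj
      obtain ⟨hj1, hj2⟩ := Finset.mem_erase.1 hj
      rw [Finset.mem_Ioi]
      refine lt_of_le_of_ne (not_lt.1 fun h => ?_) (Ne.symm hj1)
      exact (Finset.mem_compl.1 hj2) (h2 j h)
    · rw [Finset.card_erase_of_mem hmem, Finset.card_compl, hA, Fintype.card_fin]
      omega
    · apply Subtype.ext
      simp only [Finset.insert_erase hmem, compl_compl]

lemma desSet_subset {n : ℕ} (w : Equiv.Perm (Fin (n + 1))) : desSet w ⊆ Finset.Icc 1 n := by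
  intro d hd
  obtain ⟨i, -, rfl⟩ := Finset.mem_image.1 hd
  rw [Finset.mem_Icc]
  omega

lemma rev_rev {n : ℕ} (V : Finset ℕ) (hV : V ⊆ Finset.Icc 1 n) :
    (V.image (fun s => n + 1 - s)).image (fun s => n + 1 - s) = V := by
  rw [Finset.image_image]
  conv_rhs => rw [← Finset.image_id (s := V)]
  refine Finset.image_congr (fun s hs => ?_)
  have := Finset.mem_Icc.1 (hV hs)
  simp only [Function.comp, id]
  omega

lemma card_des_subset {n : ℕ} (k : ℕ) (T : Finset ℕ) (hT : T ⊆ Finset.Icc 1 n) :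
    Nat.card {w : Equiv.Perm (Fin (n + 1)) //
        (w 0 : ℕ) = k ∧ desSet w ⊆ T.image (fun s => n + 1 - s)} =
    ∑ V ∈ T.powerset, Nat.card {w : Equiv.Perm (Fin (n + 1)) //
        (w 0 : ℕ) = k ∧ desSet w = V.image (fun s => n + 1 - s)} := by
  classical
  simp only [Nat.card_eq_fintype_card, Fintype.card_subtype]
  rw [Finset.card_eq_sum_card_fiberwise (f := fun w => (desSet w).image (fun s => n + 1 - s))
    (t := T.powerset)]
  · refine Finset.sum_congr rfl fun V hV => ?_
    have hVT := Finset.mem_powerset.1 hV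
    congr 1
    ext w
    simp only [Finset.mem_filter, Finset.mem_univ, true_and]
    constructor
    · rintro ⟨⟨h1, h2⟩, rfl⟩
      exact ⟨h1, (rev_rev _ (desSet_subset w)).symm⟩
    · rintro ⟨h1, h2⟩
      refine ⟨⟨h1, ?_⟩, ?_⟩
      · rw [h2]; exact Finset.image_subset_image hVT
      · rw [h2]; exact rev_rev _ (hVT.trans hT)
  · intro w hw
    have hw := (Finset.mem_filter.1 hw).2.2
    have := Finset.image_subset_image (f := fun s => n + 1 - s) hw
    rw [rev_rev _ hT] at this
    exact Finset.mem_coe.2 (Finset.mem_powerset.2 this)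

lemma flagF_formula {P : Type*} [Fintype P] [PartialOrder P] [OrderBot P]
    (n : ℕ) (rk : P → ℕ) (hrk : IsRankFunction rk) (hsimp : SimplicialOfRank P n)
    (T : Finset ℕ) (hT : T ⊆ Finset.Icc 1 n) :
    (flagF rk T : ℤ) = ∑ k ∈ Finset.range (n + 1), hvec rk n k *
      (Nat.card {w : Equiv.Perm (Fin (n + 1)) //
        (w 0 : ℕ) = k ∧ desSet w ⊆ T.image (fun s => n + 1 - s)} : ℤ) := by
  classical
  have hloc := locBool_poset n rk hrk hsimp
  have h0T : 0 ∉ T := fun h => by simpa using hT h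
  set T0 := insert 0 T with hT0
  have hne : T0.Nonempty := ⟨0, Finset.mem_insert_self _ _⟩
  set t := T0.max' hne with ht
  have htT : t ∈ T0 := Finset.max'_mem _ _
  have hTt : ∀ s ∈ T0, s ≤ t := fun s hs => Finset.le_max' _ _ hs
  have hTn : ∀ s ∈ T0, s ≤ n := by
    intro s hs
    rcases Finset.mem_insert.1 hs with rfl | hs
    · exact Nat.zero_le _
    · exact (Finset.mem_Icc.1 (hT hs)).2
  have hF : flagF rk T = fvec rk t * boolCh t (T0.erase t) := by
    rw [flagF_eq_s4 rk hrk.1 hloc T h0T]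
    have h1 := card_chain hloc T0 t htT hTt (fun _ => True)
    have h2 : Nat.card {x : P // rk x = t ∧ True} = fvec rk t := by
      simp [fvec, Nat.card_eq_fintype_card, Fintype.card_subtype]
    rw [h2] at h1
    rw [← h1]
    refine Nat.card_congr (Equiv.subtypeEquivRight fun c => ?_)
    constructor
    · rintro ⟨hc1, hc2⟩
      refine ⟨hc1, hc2, ?_⟩
      have : t ∈ c.image rk := by rw [hc2]; exact htT
      obtain ⟨x, hx, hxt⟩ := Finset.mem_image.1 this
      exact ⟨x, hx, hxt, trivial⟩
    · rintro ⟨hc1, hc2, -⟩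
      exact ⟨hc1, hc2⟩
  have hW : ∀ k ∈ Finset.range (n + 1), Nat.card {w : Equiv.Perm (Fin (n + 1)) //
        (w 0 : ℕ) = k ∧ desSet w ⊆ T.image (fun s => n + 1 - s)} =
        (n - k).choose (n - t) * boolCh t (T0.erase t) := by
    intro k hk
    have hk := Finset.mem_range.1 hk
    rw [← card_firstMiss k t (by omega) (hTn t htT)]
    have h1 := card_chain (locBool_finset (n + 1)) T0 t htT hTt (firstMiss k)
    rw [← card_perm_eq T0 hTn t htT hTt k] at h1
    rw [← h1]
    refine Nat.card_congr (Equiv.subtypeEquivRight fun w => ?_)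
    rw [hT0, Finset.image_insert]
    refine and_congr Iff.rfl ⟨fun h => h.trans (Finset.subset_insert _ _), fun h d hd => ?_⟩
    refine (Finset.mem_insert.1 (h hd)).resolve_left ?_
    have := Finset.mem_Icc.1 (desSet_subset w hd)
    omega
  rw [hF]
  have hf := f_from_h n t (hTn t htT) (fun i => (fvec rk i : ℤ))
  push_cast
  rw [hf, Finset.sum_mul]
  refine Finset.sum_congr rfl fun k hk => ?_
  rw [hW k hk]
  unfold hvec hPoly
  push_cast
  ring

theorem statement4 {P : Type*} [Fintype P] [PartialOrder P] [OrderBot P]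
    (n : ℕ) (rk : P → ℕ)
    (hrk : IsRankFunction rk)
    (hsimp : SimplicialOfRank P n)
    (S : Finset ℕ) (hS : S ⊆ Finset.Icc 1 n) :
    flagH rk S =
      ∑ k ∈ Finset.range (n + 1), hvec rk n k *
        (Nat.card {w : Equiv.Perm (Fin (n + 1)) //
            (w 0 : ℕ) = k ∧ desSet w = S.image (fun s => n + 1 - s)} : ℤ) := by
  unfold flagH
  have h1 : ∀ T ∈ S.powerset, (-1 : ℤ) ^ ((S \ T).card) * (flagF rk T : ℤ) =
      (-1) ^ ((S \ T).card) * ∑ V ∈ T.powerset, ∑ k ∈ Finset.range (n + 1), hvec rk n k *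
        (Nat.card {w : Equiv.Perm (Fin (n + 1)) //
            (w 0 : ℕ) = k ∧ desSet w = V.image (fun s => n + 1 - s)} : ℤ) := by
    intro T hT
    have hTn := (Finset.mem_powerset.1 hT).trans hS
    rw [flagF_formula n rk hrk hsimp T hTn, Finset.sum_comm]
    congr 1
    refine Finset.sum_congr rfl fun k _ => ?_
    rw [card_des_subset k T hTn, ← Finset.mul_sum]
    push_cast
    rfl
  rw [Finset.sum_congr rfl h1]
  exact mobius_pow S (fun V => ∑ k ∈ Finset.range (n + 1), hvec rk n k *
        (Nat.card {w : Equiv.Perm (Fin (n + 1)) //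
            (w 0 : ℕ) = k ∧ desSet w = V.image (fun s => n + 1 - s)} : ℤ))
end
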